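/- arXiv:2505.19072 — 4 statements merged into one kernel-verified Lean document; each statement's English description precedes it below -/
import Mathlib

section
/- For any partition λ and any n ≥ 1, the filling T_max is a highest weight element of SVRPP^n(λ) (that is, e_i(T_max) = 0 for all i ∈ {1,...,n−1}) and wt(T_max) = λ̄^{(n)}. -/
open scoped Classical

/-- A partition, given as its weakly decreasing sequence of parts (0-indexed),
with finitely many nonzero parts. -/
def IsPartitionFun (f : ℕ → ℕ) : Prop :=
  (∀ i, f (i + 1) ≤ f i) ∧ ∃ N, ∀ i, N ≤ i → f i = 0

/-- Box `(i, j)` (row `i`, column `j`, both 0-indexed) lies in the skew shape `lam/mu`. -/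
def InShape (lam mu : ℕ → ℕ) (i j : ℕ) : Prop :=
  mu i ≤ j ∧ j < lam i

/-- `A ≤ B` for finite sets of naturals: every element of `A` is at most every
element of `B` (for nonempty sets this says `max A ≤ min B`). -/
def FinsetLE (A B : Finset ℕ) : Prop :=
  ∀ a ∈ A, ∀ b ∈ B, a ≤ b

/-- A set-valued reverse plane partition of skew shape `lam/mu`: every box of the
shape is filled with a nonempty finite set of positive integers, the sets weakly
increase along rows and down columns, and boxes outside the shape are empty. -/
def IsSVRPP (lam mu : ℕ → ℕ) (T : ℕ → ℕ → Finset ℕ) : Prop :=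
  (∀ i j, ¬ InShape lam mu i j → T i j = ∅) ∧
  (∀ i j, InShape lam mu i j → (T i j).Nonempty) ∧
  (∀ i j x, x ∈ T i j → 1 ≤ x) ∧
  (∀ i j, InShape lam mu i j → InShape lam mu i (j + 1) → FinsetLE (T i j) (T i (j + 1))) ∧
  (∀ i j, InShape lam mu i j → InShape lam mu (i + 1) j → FinsetLE (T i j) (T (i + 1) j))

/-- An SVRPP all of whose entries are subsets of `{1, …, n}`. -/
def IsSVRPPn (lam mu : ℕ → ℕ) (n : ℕ) (T : ℕ → ℕ → Finset ℕ) : Prop :=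
  IsSVRPP lam mu T ∧ ∀ i j, T i j ⊆ Finset.Icc 1 n

/-- `ircont T v` = number of columns of `T` containing a set that contains `v`. -/
noncomputable def ircont (T : ℕ → ℕ → Finset ℕ) (v : ℕ) : ℕ :=
  Set.ncard {j : ℕ | ∃ i, v ∈ T i j}

/-- `ceq lam mu T i` = number of boxes `(i,j)` of the shape with `(i+1,j)` also in the
shape and `max T(i,j) = min T(i+1,j)`. -/
noncomputable def ceq (lam mu : ℕ → ℕ) (T : ℕ → ℕ → Finset ℕ) (i : ℕ) : ℕ :=
  Set.ncard {j : ℕ | InShape lam mu i j ∧ InShape lam mu (i + 1) j ∧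
    ∃ m, m ∈ T i j ∧ (∀ x ∈ T i j, x ≤ m) ∧ m ∈ T (i + 1) j ∧ ∀ x ∈ T (i + 1) j, m ≤ x}

/-- `exv lam mu T i` = excess of row `i`: the sum over the boxes of row `i` of
(cardinality of the filling minus one). -/
def exv (lam mu : ℕ → ℕ) (T : ℕ → ℕ → Finset ℕ) (i : ℕ) : ℕ :=
  ∑ j ∈ Finset.Ico (mu i) (lam i), ((T i j).card - 1)

/-! ### Two-letter fillings (letters `a` and `a+1`) and descent resolution -/

/-- Column `j` of the filling `S` contains the letter `x` somewhere. -/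
def ColHas (S : ℕ → ℕ → Finset ℕ) (j x : ℕ) : Prop := ∃ r, x ∈ S r j

/-- Column `j` is `a`-pure: it contains the letter `a` but not the letter `a+1`. -/
def ColPureA (a : ℕ) (S : ℕ → ℕ → Finset ℕ) (j : ℕ) : Prop :=
  ColHas S j a ∧ ¬ ColHas S j (a + 1)

/-- Column `j` is `(a+1)`-pure: it contains the letter `a+1` but not the letter `a`. -/
def ColPureB (a : ℕ) (S : ℕ → ℕ → Finset ℕ) (j : ℕ) : Prop :=
  ColHas S j (a + 1) ∧ ¬ ColHas S j a

/-- Column `j` is mixed: it contains both letters `a` and `a+1`. -/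
def ColMixed (a : ℕ) (S : ℕ → ℕ → Finset ℕ) (j : ℕ) : Prop :=
  ColHas S j a ∧ ColHas S j (a + 1)

/-- `sep a S j`: the smallest row index `r` with `a+1 ∈ S r j` (the transition row of a
mixed column). -/
noncomputable def sep (a : ℕ) (S : ℕ → ℕ → Finset ℕ) (j : ℕ) : ℕ :=
  sInf {r : ℕ | a + 1 ∈ S r j}

/-- `botA a S j`: the largest row index `r` with `a ∈ S r j` (the bottom-most box of
column `j` containing the letter `a`). -/
noncomputable def botA (a : ℕ) (S : ℕ → ℕ → Finset ℕ) (j : ℕ) : ℕ :=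
  sSup {r : ℕ | a ∈ S r j}

/-- `k` is a descent of `S`: in some row, a box whose maximum is `a+1` lies immediately
to the left of a box whose minimum is `a`. -/
def Descent (a : ℕ) (S : ℕ → ℕ → Finset ℕ) (k : ℕ) : Prop :=
  ∃ r, a + 1 ∈ S r k ∧ a ∈ S r (k + 1)

/-- The flip map: each entry of every `a`-pure column is replaced by `{a+1}`, each entry
of every `(a+1)`-pure column is replaced by `{a}`, and mixed columns stay unchanged. -/
noncomputable def flipT (a : ℕ) (S : ℕ → ℕ → Finset ℕ) : ℕ → ℕ → Finset ℕ :=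
  fun r j =>
    if ColPureA a S j then (S r j).image (fun _ => a + 1)
    else if ColPureB a S j then (S r j).image (fun _ => a)
    else S r j

/-- The descent-resolution operation `res_k` at columns `k, k+1`, implementing the
(M1), (2M) and (21) moves (with `a, a+1` playing the roles of `1, 2`). -/
noncomputable def resFun (a : ℕ) (S : ℕ → ℕ → Finset ℕ) (k : ℕ) : ℕ → ℕ → Finset ℕ :=
  fun r j =>
    if ColMixed a S k ∧ ColPureA a S (k + 1) then
      -- (M1): the transition row is `sep a S k`, the transition entry is `S (sep a S k) k`.
      (if j = k then (S r j).image (fun _ => a)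
       else if j = k + 1 then
         (if (S r j).Nonempty then
            (if r < sep a S k then {a}
             else if r = sep a S k then S r k
             else {a + 1})
          else ∅)
       else S r j)
    else if ColPureB a S k ∧ ColMixed a S (k + 1) then
      -- (2M): the transition row is `botA a S (k+1)`, the transition entry is
      -- `S (botA a S (k+1)) (k+1)`.
      (if j = k then
         (if (S r j).Nonempty then
            (if r < botA a S (k + 1) then {a}
             else if r = botA a S (k + 1) then S r (k + 1)
             else {a + 1})
          else ∅)
       else if j = k + 1 then (S r j).image (fun _ => a + 1)
       else S r j)
    else if ColPureB a S k ∧ ColPureA a S (k + 1) then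
      -- (21): the two columns swap purities.
      (if j = k then (S r j).image (fun _ => a)
       else if j = k + 1 then (S r j).image (fun _ => a + 1)
       else S r j)
    else S r j

/-- One descent-resolution step: `ResStep a S S'` holds when `S' = res_k S` for some
descent `k` of `S`. -/
def ResStep (a : ℕ) (S S' : ℕ → ℕ → Finset ℕ) : Prop :=
  ∃ k, Descent a S k ∧ S' = resFun a S k

/-! ### Crystal operators on set-valued reverse plane partitions -/

/-- The restriction `T^{(i)}` of a filling to the letters `i` and `i+1`: each box keeps
its intersection with `{i, i+1}`. -/
def restrictTwo (i : ℕ) (T : ℕ → ℕ → Finset ℕ) : ℕ → ℕ → Finset ℕ :=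
  fun r j => (T r j).filter (fun x => x = i ∨ x = i + 1)

/-- The complement of `T^{(i)}` inside `T`: each box keeps its letters other than
`i` and `i+1`. -/
def eraseTwo (i : ℕ) (T : ℕ → ℕ → Finset ℕ) : ℕ → ℕ → Finset ℕ :=
  fun r j => (T r j).filter (fun x => ¬ (x = i ∨ x = i + 1))

/-- Recombine a filling `T` with a new `{i, i+1}`-part `S`. -/
def mergeTwo (i : ℕ) (T S : ℕ → ℕ → Finset ℕ) : ℕ → ℕ → Finset ℕ :=
  fun r j => eraseTwo i T r j ∪ S r j

/-- In column `A`, replace every letter `i+1` by `i`. -/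
def raiseCol (i A : ℕ) (S : ℕ → ℕ → Finset ℕ) : ℕ → ℕ → Finset ℕ :=
  fun r j => if j = A then (S r j).image (fun x => if x = i + 1 then i else x) else S r j

/-- In column `A`, replace every letter `i` by `i+1`. -/
def lowerCol (i A : ℕ) (S : ℕ → ℕ → Finset ℕ) : ℕ → ℕ → Finset ℕ :=
  fun r j => if j = A then (S r j).image (fun x => if x = i then i + 1 else x) else S r j

/-- Suffix statistic of the `i`-signature: the number of `(i+1)`-pure columns `≥ p` minus
the number of `i`-pure columns `≥ p` (of `T^{(i)}`). -/
noncomputable def fsuffix (i : ℕ) (T : ℕ → ℕ → Finset ℕ) (p : ℕ) : ℤ :=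
  (Set.ncard {j : ℕ | p ≤ j ∧ ColPureB i (restrictTwo i T) j} : ℤ) -
  (Set.ncard {j : ℕ | p ≤ j ∧ ColPureA i (restrictTwo i T) j} : ℤ)

/-- Prefix statistic of the `i`-signature: the number of `i`-pure columns `≤ p` minus the
number of `(i+1)`-pure columns `≤ p` (of `T^{(i)}`). -/
noncomputable def gprefix (i : ℕ) (T : ℕ → ℕ → Finset ℕ) (p : ℕ) : ℤ :=
  (Set.ncard {j : ℕ | j ≤ p ∧ ColPureA i (restrictTwo i T) j} : ℤ) -
  (Set.ncard {j : ℕ | j ≤ p ∧ ColPureB i (restrictTwo i T) j} : ℤ)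

/-- Column `A` carries the leftmost uncancelled `−` of the reduced `i`-signature of `T`:
it is `(i+1)`-pure and is the largest maximizer of the suffix statistic. -/
def LeftmostUnpairedMinus (i : ℕ) (T : ℕ → ℕ → Finset ℕ) (A : ℕ) : Prop :=
  ColPureB i (restrictTwo i T) A ∧
  (∀ p, fsuffix i T p ≤ fsuffix i T A) ∧
  (∀ p, A < p → fsuffix i T p < fsuffix i T A)

/-- Column `A` carries the rightmost uncancelled `+` of the reduced `i`-signature of `T`:
it is `i`-pure and is the smallest maximizer of the prefix statistic. -/
def RightmostUnpairedPlus (i : ℕ) (T : ℕ → ℕ → Finset ℕ) (A : ℕ) : Prop :=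
  ColPureA i (restrictTwo i T) A ∧
  (∀ p, gprefix i T p ≤ gprefix i T A) ∧
  (∀ p, p < A → gprefix i T p < gprefix i T A)

/-- `ERel i T T'` : `T'` is obtained from `T` by the raising operator `e_i`: change all
`(i+1)`'s to `i`'s in the column of the leftmost uncancelled `−`, run the
descent-resolution algorithm on the `{i, i+1}`-part until no descent remains, and merge
the result back into `T`. -/
def ERel (i : ℕ) (T T' : ℕ → ℕ → Finset ℕ) : Prop :=
  ∃ A S', LeftmostUnpairedMinus i T A ∧
    Relation.ReflTransGen (ResStep i) (raiseCol i A (restrictTwo i T)) S' ∧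
    (∀ k, ¬ Descent i S' k) ∧
    T' = mergeTwo i T S'

/-- `FRel i T T'` : `T'` is obtained from `T` by the lowering operator `f_i`. -/
def FRel (i : ℕ) (T T' : ℕ → ℕ → Finset ℕ) : Prop :=
  ∃ A S', RightmostUnpairedPlus i T A ∧
    Relation.ReflTransGen (ResStep i) (lowerCol i A (restrictTwo i T)) S' ∧
    (∀ k, ¬ Descent i S' k) ∧
    T' = mergeTwo i T S'

/-- The raising crystal operator `e_i` (with value `none` playing the role of `0`). -/
noncomputable def eOp (i : ℕ) (T : ℕ → ℕ → Finset ℕ) : Option (ℕ → ℕ → Finset ℕ) :=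
  if h : ∃ T', ERel i T T' then some h.choose else none

/-- The lowering crystal operator `f_i` (with value `none` playing the role of `0`). -/
noncomputable def fOp (i : ℕ) (T : ℕ → ℕ → Finset ℕ) : Option (ℕ → ℕ → Finset ℕ) :=
  if h : ∃ T', FRel i T T' then some h.choose else none

/-! ### The partitions `λ^♭` and `λ̄^{(n)}` and the tableau `T_max` -/

/-- The strict partition `λ^♭` (1-indexed part `v` is `flatPart lam (v-1)`):
`λ^♭_1 = λ_1` and `λ^♭_i = max{0, min{λ^♭_{i−1} − 1, λ_i}}` for `i ≥ 2` (truncated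
subtraction realizes the `max{0, ·}`). -/
def flatPart (lam : ℕ → ℕ) : ℕ → ℕ
  | 0 => lam 0
  | i + 1 => min (flatPart lam i - 1) (lam (i + 1))

/-- `k` = number of positive parts of `λ^♭`. -/
noncomputable def kFlat (lam : ℕ → ℕ) : ℕ :=
  Set.ncard {i : ℕ | 0 < flatPart lam i}

/-- The partition `λ̄^{(n)}`, as a function of the 1-indexed part `v`:
`λ̄^{(n)}_v = λ^♭_v + v − 1` for `1 ≤ v ≤ min(n, k)`, `λ̄^{(n)}_v = k` for `k < v ≤ n`,
and `0` for `v > n`. -/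
noncomputable def barLam (lam : ℕ → ℕ) (n : ℕ) (v : ℕ) : ℕ :=
  if 1 ≤ v ∧ v ≤ n then
    (if v ≤ kFlat lam then flatPart lam (v - 1) + (v - 1) else kFlat lam)
  else 0

/-- The tableau `T_max ∈ SVRPP^n(lam)`: in 1-indexed coordinates `(i, j)`,
`T_max(i,j) = {i}` if `i ≤ n` and `j < λ^♭_i`; `T_max(i,j) = {i, …, n}` if `i ≤ n` and
`j = λ^♭_i`; and `T_max(i,j) = {n}` otherwise (internally rows `r` and columns `j` are
0-indexed, so `(i, j) = (r + 1, j + 1)`). -/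
noncomputable def Tmax (lam : ℕ → ℕ) (n : ℕ) : ℕ → ℕ → Finset ℕ :=
  fun r j =>
    if j < lam r then
      (if r + 1 ≤ n ∧ j + 1 < flatPart lam r then {r + 1}
       else if r + 1 ≤ n ∧ j + 1 = flatPart lam r then Finset.Icc (r + 1) n
       else {n})
    else ∅

theorem aux_flat_le (lam : ℕ → ℕ) (r : ℕ) : flatPart lam r ≤ lam r := by
  cases r with
  | zero => simp [flatPart]
  | succ r => simp [flatPart]

theorem aux_flat_succ (lam : ℕ → ℕ) (r : ℕ) : flatPart lam (r + 1) ≤ flatPart lam r - 1 := by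
  simp [flatPart]

theorem aux_flat_anti (lam : ℕ → ℕ) {r s : ℕ} (h : r < s) :
    flatPart lam s ≤ flatPart lam r - 1 := by
  induction s, h using Nat.le_induction with
  | base => exact aux_flat_succ lam r
  | succ s _ ih => have := aux_flat_succ lam s; omega

theorem aux_lam_anti (lam : ℕ → ℕ) (hlam : IsPartitionFun lam) {r s : ℕ} (h : r ≤ s) :
    lam s ≤ lam r := antitone_nat_of_succ_le hlam.1 h

theorem aux_mem (lam : ℕ → ℕ) (n r j x : ℕ) : x ∈ Tmax lam n r j ↔
    j < lam r ∧ ((r + 1 ≤ n ∧ j + 1 < flatPart lam r ∧ x = r + 1) ∨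
      (r + 1 ≤ n ∧ j + 1 = flatPart lam r ∧ r + 1 ≤ x ∧ x ≤ n) ∨
      ((n < r + 1 ∨ flatPart lam r < j + 1) ∧ x = n)) := by
  unfold Tmax
  split_ifs with h1 h2 h3
  · simp only [Finset.mem_singleton]; omega
  · simp only [Finset.mem_Icc]; omega
  · simp only [Finset.mem_singleton]; omega
  · simp [h1]

theorem aux_corner (lam : ℕ → ℕ) (hlam : IsPartitionFun lam) (j r : ℕ) (h : j < lam r)
    (h' : flatPart lam r < j + 1) : ∃ s, s < r ∧ j + 1 = flatPart lam s := by
  induction r with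
  | zero => simp [flatPart] at h'; omega
  | succ r ih =>
    have h1 := hlam.1 r
    simp only [flatPart] at h'
    by_cases h2 : j + 1 = flatPart lam r
    · exact ⟨r, by omega, h2⟩
    · obtain ⟨s, hs, hs'⟩ := ih (by omega) (by omega)
      exact ⟨s, by omega, hs'⟩

theorem aux_col (lam : ℕ → ℕ) (hlam : IsPartitionFun lam) (n m j : ℕ) (hm : m < n) :
    (∃ r, m + 1 ∈ Tmax lam n r j) ↔
      (j < flatPart lam m ∨ ∃ r, r < m ∧ j + 1 = flatPart lam r) := by
  constructor
  · rintro ⟨r, hr⟩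
    rw [aux_mem] at hr
    obtain ⟨h1, ⟨h2, h3, h4⟩ | ⟨h2, h3, h4, h5⟩ | ⟨h2, h3⟩⟩ := hr
    · obtain rfl : m = r := by omega
      left; omega
    · rcases Nat.lt_or_ge r m with h | h
      · exact Or.inr ⟨r, h, h3⟩
      · obtain rfl : m = r := by omega
        left; omega
    · by_cases hj : j < flatPart lam m
      · exact Or.inl hj
      · right
        rcases Nat.lt_or_ge m r with h | h
        · exact aux_corner lam hlam j m (lt_of_lt_of_le h1 (aux_lam_anti lam hlam h.le)) (by omega)
        · obtain ⟨s, hs, hs'⟩ := aux_corner lam hlam j r h1 (by omega)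
          exact ⟨s, by omega, hs'⟩
  · rintro (h | ⟨r, hr, h⟩)
    · refine ⟨m, (aux_mem ..).2 ?_⟩
      have := aux_flat_le lam m
      omega
    · refine ⟨r, (aux_mem ..).2 ?_⟩
      have := aux_flat_le lam r
      omega

theorem aux_noB (lam : ℕ → ℕ) (hlam : IsPartitionFun lam) (n i j : ℕ) (hi : 1 ≤ i) (hin : i < n) :
    ¬ ColPureB i (restrictTwo i (Tmax lam n)) j := by
  rintro ⟨⟨r, hr⟩, h2⟩
  apply h2
  have hr' : i + 1 ∈ Tmax lam n r j := (Finset.mem_filter.1 hr).1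
  obtain ⟨m, rfl⟩ : ∃ m, i = m + 1 := ⟨i - 1, by omega⟩
  have h3 := (aux_col lam hlam n (m + 1) j hin).1 ⟨r, hr'⟩
  have h4 : ∃ r, m + 1 ∈ Tmax lam n r j := by
    rw [aux_col lam hlam n m j (by omega)]
    rcases h3 with h | ⟨s, hs, h⟩
    · have := aux_flat_succ lam m
      left; omega
    · rcases Nat.lt_or_ge s m with h' | h'
      · exact Or.inr ⟨s, h', h⟩
      · obtain rfl : s = m := by omega
        left; omega
  obtain ⟨s, hs⟩ := h4
  exact ⟨s, by simp [restrictTwo, hs]⟩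

theorem aux_k (lam : ℕ → ℕ) (hlam : IsPartitionFun lam) (i : ℕ) :
    0 < flatPart lam i ↔ i < kFlat lam := by
  obtain ⟨N, hN⟩ := hlam.2
  have hex : ∃ i, flatPart lam i = 0 :=
    ⟨N, by have := aux_flat_le lam N; have := hN N le_rfl; omega⟩
  have key : ∀ i, 0 < flatPart lam i ↔ i < Nat.find hex := by
    intro i
    constructor
    · intro h
      by_contra hc
      have h0 := Nat.find_spec hex
      rcases Nat.lt_or_ge (Nat.find hex) i with h1 | h1
      · have := aux_flat_anti lam h1; omega
      · have h2 : Nat.find hex = i := by omega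
        rw [h2] at h0; omega
    · intro h
      have := Nat.find_min hex h
      omega
  have : kFlat lam = Nat.find hex := by
    unfold kFlat
    have : {i : ℕ | 0 < flatPart lam i} = ↑(Finset.range (Nat.find hex)) := by
      ext i; simp only [Set.mem_setOf_eq, Finset.coe_range, Set.mem_Iio]; exact key i
    rw [this, Set.ncard_coe_finset, Finset.card_range]
  rw [this]; exact key i

theorem aux_card (lam : ℕ → ℕ) (hlam : IsPartitionFun lam) (m : ℕ) :
    Set.ncard {j : ℕ | j < flatPart lam m ∨ ∃ r, r < m ∧ j + 1 = flatPart lam r} =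
      flatPart lam m + min m (kFlat lam) := by
  have hk := aux_k lam hlam
  have hs : {j : ℕ | j < flatPart lam m ∨ ∃ r, r < m ∧ j + 1 = flatPart lam r} =
      ↑(Finset.range (flatPart lam m) ∪
        (Finset.range (min m (kFlat lam))).image (fun r => flatPart lam r - 1)) := by
    ext j
    simp only [Set.mem_setOf_eq, Finset.coe_union, Finset.coe_range, Finset.coe_image,
      Set.mem_union, Set.mem_Iio, Set.mem_image, lt_min_iff]
    refine or_congr_right ⟨?_, ?_⟩
    · rintro ⟨r, h, h'⟩
      exact ⟨r, ⟨h, (hk r).1 (by omega)⟩, by omega⟩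
    · rintro ⟨r, ⟨h, h1⟩, h'⟩
      have := (hk r).2 h1
      exact ⟨r, h, by omega⟩
  rw [hs, Set.ncard_coe_finset, Finset.card_union_of_disjoint, Finset.card_range,
    Finset.card_image_of_injOn, Finset.card_range]
  · intro a ha b hb hab
    simp only [Finset.coe_range, Set.mem_Iio, lt_min_iff] at ha hb
    have h1 := (hk a).2 ha.2
    have h2 := (hk b).2 hb.2
    simp only at hab
    rcases lt_trichotomy a b with h | h | h
    · have := aux_flat_anti lam h; omega
    · exact h
    · have := aux_flat_anti lam h; omega
  · rw [Finset.disjoint_left]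
    intro j hj hj'
    simp only [Finset.mem_range, Finset.mem_image, lt_min_iff] at hj hj'
    obtain ⟨r, ⟨h, _⟩, h'⟩ := hj'
    have := aux_flat_anti lam h
    omega

/-- For any partition `lam` and any `n ≥ 1`, the filling `T_max` is a
highest weight element of `SVRPP^n(lam)` (i.e. it lies in `SVRPP^n(lam)` and
`e_i(T_max) = 0` for all `i ∈ {1,…,n−1}`) and `wt(T_max) = λ̄^{(n)}`. -/
theorem Tmax_highest_weight (lam : ℕ → ℕ) (hlam : IsPartitionFun lam)
    (n : ℕ) (hn : 1 ≤ n) :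
    IsSVRPPn lam (fun _ => 0) n (Tmax lam n) ∧
    (∀ i, 1 ≤ i → i < n → eOp i (Tmax lam n) = none) ∧
    (∀ v, ircont (Tmax lam n) v = barLam lam n v) := by
  refine ⟨⟨⟨?_, ?_, ?_, ?_, ?_⟩, ?_⟩, ?_, ?_⟩
  · intro i j h
    simp only [InShape, zero_le, true_and] at h
    simp [Tmax, h]
  · rintro i j ⟨_, h⟩
    by_cases h1 : i + 1 ≤ n ∧ j + 1 < flatPart lam i
    · exact ⟨i + 1, (aux_mem ..).2 (by omega)⟩
    · exact ⟨n, (aux_mem ..).2 (by omega)⟩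
  · intro i j x hx
    rw [aux_mem] at hx; omega
  · intro i j _ _ a ha b hb
    rw [aux_mem] at ha hb; omega
  · intro i j _ _ a ha b hb
    rw [aux_mem] at ha hb
    have := aux_flat_succ lam i
    omega
  · intro i j x hx
    rw [aux_mem] at hx
    rw [Finset.mem_Icc]; omega
  · intro i hi hin
    unfold eOp
    rw [dif_neg]
    rintro ⟨T', A, S', ⟨hB, _⟩, _⟩
    exact aux_noB lam hlam n i A hi hin hB
  · intro v
    unfold ircont barLam
    split_ifs with h1 h2
    · obtain ⟨m, rfl⟩ : ∃ m, v = m + 1 := ⟨v - 1, by omega⟩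
      simp only [aux_col lam hlam n m _ (show m < n by omega)]
      rw [aux_card lam hlam]
      simp; omega
    · obtain ⟨m, rfl⟩ : ∃ m, v = m + 1 := ⟨v - 1, by omega⟩
      simp only [aux_col lam hlam n m _ (show m < n by omega)]
      rw [aux_card lam hlam]
      have := aux_k lam hlam m
      omega
    · have : {j : ℕ | ∃ i, v ∈ Tmax lam n i j} = ∅ := by
        ext j
        simp only [Set.mem_setOf_eq, Set.mem_empty_iff_false, iff_false]
        rintro ⟨r, hr⟩
        rw [aux_mem] at hr; omega
      rw [this, Set.ncard_empty]
end

section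
/- For any partition λ, any n ≥ 1, and any partition ρ satisfying (λ_1) ⊆ ρ ⊆ λ̄^{(n)} (that is, ρ_1 ≥ λ_1 and ρ_i ≤ λ̄^{(n)}_i for all i), there exists a highest weight element T ∈ SVRPP^n(λ) with wt(T) = ρ. -/
open scoped Classical

namespace HW

theorem flat_le (lam : ℕ → ℕ) (i : ℕ) : flatPart lam i ≤ lam i := by
  cases i <;> simp [flatPart]

theorem flat_succ (lam : ℕ → ℕ) (i : ℕ) : flatPart lam (i + 1) ≤ flatPart lam i - 1 := by
  simp [flatPart]

theorem flat_anti (lam : ℕ → ℕ) : Antitone (flatPart lam) :=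
  antitone_nat_of_succ_le fun i => (flat_succ lam i).trans (Nat.sub_le _ _)

theorem flat_lt (lam : ℕ → ℕ) {s t : ℕ} (h : s < t) (ht : 0 < flatPart lam s) :
    flatPart lam t < flatPart lam s := by
  have h1 := flat_anti lam (Nat.succ_le_of_lt h)
  have h2 := flat_succ lam s
  simp only [Nat.succ_eq_add_one] at h1
  omega

theorem flat_pos (lam : ℕ → ℕ) {s : ℕ} (h : s < kFlat lam) : 0 < flatPart lam s := by
  by_contra hc
  have hsub : {i : ℕ | 0 < flatPart lam i} ⊆ ((Finset.range s : Finset ℕ) : Set ℕ) := by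
    intro i hi
    simp only [Set.mem_ofPred_eq] at hi
    simp only [Finset.coe_range, Set.mem_Iio]
    by_contra hlt
    have := flat_anti lam (not_lt.mp hlt)
    omega
  have := Set.ncard_le_ncard hsub (Finset.finite_toSet _)
  rw [Set.ncard_coe_finset, Finset.card_range] at this
  unfold kFlat at h
  omega

/-- Columns in which the letter `v` may occur. -/
noncomputable def C (lam : ℕ → ℕ) (v : ℕ) : Finset ℕ :=
  (Finset.range (lam 0)).filter
    (fun j => j < flatPart lam (v - 1) ∨ ∃ s, s < v ∧ flatPart lam s = j + 1)

theorem C_card (lam : ℕ → ℕ) (n v : ℕ) (hv : 1 ≤ v) : barLam lam n v ≤ (C lam v).card := by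
  set m := min (v - 1) (kFlat lam) with hm
  have hb : barLam lam n v ≤ flatPart lam (v - 1) + m := by
    unfold barLam
    split_ifs <;> omega
  refine hb.trans ?_
  have hdisj : Disjoint (Finset.range (flatPart lam (v - 1)))
      ((Finset.range m).image (fun s => flatPart lam s - 1)) := by
    rw [Finset.disjoint_left]
    intro j hj hj'
    simp only [Finset.mem_range, Finset.mem_image] at hj hj'
    obtain ⟨s, hs, rfl⟩ := hj'
    have := flat_lt lam (s := s) (t := v - 1) (by omega) (flat_pos lam (by omega))
    omega
  have hinj : Set.InjOn (fun s => flatPart lam s - 1) (Finset.range m : Finset ℕ) := by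
    intro s hs t ht hst
    simp only [Finset.coe_range, Set.mem_Iio] at hs ht hst
    have ps := flat_pos lam (s := s) (by omega)
    have pt := flat_pos lam (s := t) (by omega)
    rcases lt_trichotomy s t with h | h | h
    · have := flat_lt lam h ps; omega
    · exact h
    · have := flat_lt lam h pt; omega
  have hc : (Finset.range (flatPart lam (v - 1)) ∪
      (Finset.range m).image (fun s => flatPart lam s - 1)).card = flatPart lam (v - 1) + m := by
    rw [Finset.card_union_of_disjoint hdisj, Finset.card_image_of_injOn hinj]
    simp
  rw [← hc]
  apply Finset.card_le_card
  intro j hj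
  simp only [Finset.mem_union, Finset.mem_range, Finset.mem_image] at hj
  simp only [C, Finset.mem_filter, Finset.mem_range]
  rcases hj with hj | ⟨s, hs, rfl⟩
  · have := flat_anti lam (Nat.zero_le (v - 1))
    have h0 : flatPart lam 0 = lam 0 := rfl
    exact ⟨by omega, Or.inl hj⟩
  · have := flat_anti lam (Nat.zero_le s)
    have h0 : flatPart lam 0 = lam 0 := rfl
    have ps := flat_pos lam (s := s) (by omega)
    exact ⟨by omega, Or.inr ⟨s, by omega, by omega⟩⟩

theorem C_succ (lam : ℕ → ℕ) (v : ℕ) (hv : 1 ≤ v) : C lam (v + 1) ⊆ C lam v := by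
  intro j hj
  simp only [C, Finset.mem_filter, Finset.mem_range] at hj ⊢
  refine ⟨hj.1, ?_⟩
  have ha := flat_anti lam (show v - 1 ≤ v by omega)
  rcases hj.2 with h | ⟨s, hs, h⟩
  · left
    simp only [Nat.add_sub_cancel] at h
    omega
  · by_cases hsv : s < v
    · exact Or.inr ⟨s, hsv, h⟩
    · left
      have : s = v := by omega
      subst this
      omega

theorem exists_cut (C : Finset ℕ) (m : ℕ) (h : m ≤ C.card) :
    ∃ q, (C.filter (fun j => q ≤ j)).card = m := by
  have key : ∀ q, (C.filter (fun j => q ≤ j)).card ≤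
      (C.filter (fun j => q + 1 ≤ j)).card + 1 := by
    intro q
    have : C.filter (fun j => q ≤ j) ⊆ insert q (C.filter (fun j => q + 1 ≤ j)) := by
      intro j hj
      simp only [Finset.mem_filter, Finset.mem_insert] at hj ⊢
      by_cases hq : j = q
      · exact Or.inl hq
      · exact Or.inr ⟨hj.1, by omega⟩
    exact (Finset.card_le_card this).trans (Finset.card_insert_le _ _)
  have hex : ∃ q, (C.filter (fun j => q ≤ j)).card ≤ m := by
    refine ⟨C.sup id + 1, ?_⟩
    have : C.filter (fun j => C.sup id + 1 ≤ j) = ∅ := by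
      apply Finset.filter_eq_empty_iff.mpr
      intro j hj
      have := Finset.le_sup (f := id) hj
      simp only [id] at this
      omega
    rw [this]; simp
  have hs := Nat.find_spec hex
  have hmin := fun k => @Nat.find_min _ _ hex k
  refine ⟨Nat.find hex, le_antisymm hs ?_⟩
  generalize Nat.find hex = q at hs hmin
  cases q with
  | zero => simpa using h
  | succ q =>
    have h1 := hmin q (by omega)
    have h2 := key q
    omega

noncomputable def U (lam q : ℕ → ℕ) (n r j : ℕ) : Finset ℕ :=
  (Finset.Icc 1 n).filter (fun v => q v ≤ j ∧
    ((v ≤ r + 1 ∧ j < flatPart lam (v - 1)) ∨ ∃ s, s ≤ r ∧ s < v ∧ flatPart lam s = j + 1))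

noncomputable def D (lam q : ℕ → ℕ) (n r j : ℕ) : Finset ℕ :=
  (Finset.Icc 1 n).filter (fun v => q v ≤ j ∧
    ((v = r + 1 ∧ j < flatPart lam r) ∨ (r < v ∧ flatPart lam r = j + 1)))

noncomputable def T (lam q : ℕ → ℕ) (n : ℕ) : ℕ → ℕ → Finset ℕ := fun r j =>
  if j < lam r then
    (if (D lam q n r j).Nonempty then D lam q n r j
     else (U lam q n r j).filter (fun v => ∀ w ∈ U lam q n r j, w ≤ v))
  else ∅

theorem D_sub (lam q : ℕ → ℕ) (n r j : ℕ) : D lam q n r j ⊆ U lam q n r j := by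
  intro v hv
  simp only [D, U, Finset.mem_filter] at hv ⊢
  refine ⟨hv.1, hv.2.1, ?_⟩
  rcases hv.2.2 with ⟨h, h'⟩ | ⟨h, h'⟩
  · subst h; exact Or.inl ⟨le_rfl, by simpa using h'⟩
  · exact Or.inr ⟨r, le_rfl, h, h'⟩

theorem T_sub (lam q : ℕ → ℕ) (n r j : ℕ) : T lam q n r j ⊆ U lam q n r j := by
  unfold T
  split_ifs
  · exact D_sub _ _ _ _ _
  · exact Finset.filter_subset _ _
  · simp

theorem D_sub_T (lam q : ℕ → ℕ) (n r j : ℕ) (h : j < lam r) :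
    D lam q n r j ⊆ T lam q n r j := by
  intro v hv
  have : (D lam q n r j).Nonempty := ⟨v, hv⟩
  simp [T, h, this, hv]

theorem T_cases (lam q : ℕ → ℕ) (n r j b : ℕ) (hb : b ∈ T lam q n r j) :
    b ∈ D lam q n r j ∨ ∀ w ∈ U lam q n r j, w ≤ b := by
  unfold T at hb
  split_ifs at hb
  · exact Or.inl hb
  · exact Or.inr (Finset.mem_filter.mp hb).2
  · simp at hb

theorem row (lam q : ℕ → ℕ) (hlam : Antitone lam) (n r j a b : ℕ) (h : j + 1 < lam r)
    (ha : a ∈ U lam q n r j) (hb : b ∈ T lam q n r (j + 1)) : a ≤ b := by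
  rcases T_cases _ _ _ _ _ _ hb with hb | hb
  · simp only [D, U, Finset.mem_filter] at ha hb
    have hjr : j + 1 ≤ flatPart lam r - 1 + 1 ∧ r + 1 ≤ b ∧ j + 1 < flatPart lam r + 1 ∧
        j + 1 < flatPart lam r + 1 := by omega
    rcases ha.2.2 with h1 | ⟨s, hs, hsa, hf⟩
    · omega
    · have := flat_anti lam hs
      omega
  · apply hb
    simp only [U, Finset.mem_filter] at ha ⊢
    refine ⟨ha.1, by omega, ?_⟩
    have h1 := (Finset.mem_Icc.mp ha.1).1
    have main : ∀ s, s ≤ r → s < a → flatPart lam s = j + 1 →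
        ∃ s, s ≤ r ∧ s < a ∧ flatPart lam s = j + 1 + 1 := by
      intro s hs hsa hf
      have hl := hlam hs
      cases s with
      | zero => simp only [flatPart] at hf; omega
      | succ s =>
        refine ⟨s, by omega, by omega, ?_⟩
        simp only [flatPart] at hf
        omega
    rcases ha.2.2 with ⟨h2, h3⟩ | ⟨s, hs, hsa, hf⟩
    · by_cases h4 : j + 1 < flatPart lam (a - 1)
      · exact Or.inl ⟨h2, h4⟩
      · exact Or.inr (main (a - 1) (by omega) (by omega) (by omega))
    · exact Or.inr (main s hs hsa hf)

theorem col (lam q : ℕ → ℕ) (n r j a b : ℕ)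
    (ha : a ∈ U lam q n r j) (hb : b ∈ T lam q n (r + 1) j) : a ≤ b := by
  rcases T_cases _ _ _ _ _ _ hb with hb | hb
  · simp only [D, U, Finset.mem_filter] at ha hb
    have hjr : r + 2 ≤ b ∧ j < flatPart lam (r + 1) := by omega
    rcases ha.2.2 with h1 | ⟨s, hs, hsa, hf⟩
    · omega
    · have := flat_lt lam (s := s) (t := r + 1) (by omega) (by omega)
      omega
  · apply hb
    simp only [U, Finset.mem_filter] at ha ⊢
    refine ⟨ha.1, ha.2.1, ?_⟩
    rcases ha.2.2 with h1 | ⟨s, hs, hsa, hf⟩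
    · exact Or.inl ⟨by omega, h1.2⟩
    · exact Or.inr ⟨s, by omega, hsa, hf⟩

noncomputable def Cq (lam q : ℕ → ℕ) (v : ℕ) : Finset ℕ := (C lam v).filter (fun j => q v ≤ j)

theorem mem_col (lam q : ℕ → ℕ) (n v j : ℕ)
    (hout : ¬ (1 ≤ v ∧ v ≤ n) → Cq lam q v = ∅) :
    (∃ r, v ∈ T lam q n r j) ↔ j ∈ Cq lam q v := by
  constructor
  · rintro ⟨r, hr⟩
    have hU := T_sub _ _ _ _ _ hr
    simp only [U, Finset.mem_filter] at hU
    simp only [Cq, C, Finset.mem_filter, Finset.mem_range]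
    have h0 : flatPart lam 0 = lam 0 := rfl
    rcases hU.2.2 with h1 | ⟨s, hs, hsa, hf⟩
    · have := flat_anti lam (Nat.zero_le (v - 1))
      exact ⟨⟨by omega, Or.inl h1.2⟩, hU.2.1⟩
    · have := flat_anti lam (Nat.zero_le s)
      exact ⟨⟨by omega, Or.inr ⟨s, hsa, hf⟩⟩, hU.2.1⟩
  · intro hj
    have hv : 1 ≤ v ∧ v ≤ n := by
      by_contra hc
      rw [hout hc] at hj
      simp at hj
    simp only [Cq, C, Finset.mem_filter, Finset.mem_range] at hj
    rcases hj.1.2 with h | ⟨s, hs, h⟩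
    · refine ⟨v - 1, D_sub_T _ _ _ _ _ (lt_of_lt_of_le h (flat_le _ _)) ?_⟩
      simp only [D, Finset.mem_filter, Finset.mem_Icc]
      exact ⟨hv, hj.2, Or.inl ⟨by omega, h⟩⟩
    · refine ⟨s, D_sub_T _ _ _ _ _ (by have := flat_le lam s; omega) ?_⟩
      simp only [D, Finset.mem_filter, Finset.mem_Icc]
      exact ⟨hv, hj.2, Or.inr ⟨hs, h⟩⟩

theorem eOp_none (i : ℕ) (T : ℕ → ℕ → Finset ℕ) (A B : Finset ℕ)
    (hA : ∀ j, (∃ r, i ∈ T r j) ↔ j ∈ A) (hB : ∀ j, (∃ r, i + 1 ∈ T r j) ↔ j ∈ B)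
    (h : ∀ p, (B.filter (fun j => p ≤ j)).card ≤ (A.filter (fun j => p ≤ j)).card) :
    eOp i T = none := by
  have hA' : ∀ j, ColHas (restrictTwo i T) j i ↔ j ∈ A := by
    intro j; rw [← hA]; simp [ColHas, restrictTwo]
  have hB' : ∀ j, ColHas (restrictTwo i T) j (i + 1) ↔ j ∈ B := by
    intro j; rw [← hB]; simp [ColHas, restrictTwo]
  have hf : ∀ p, fsuffix i T p = ((B.filter (fun j => p ≤ j)).card : ℤ) -
      ((A.filter (fun j => p ≤ j)).card : ℤ) := by
    intro p
    have e1 : {j : ℕ | p ≤ j ∧ ColPureB i (restrictTwo i T) j} =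
        ((B.filter (fun j => p ≤ j) \ A.filter (fun j => p ≤ j) : Finset ℕ) : Set ℕ) := by
      ext j
      simp only [ColPureB, hA', hB', Set.mem_ofPred_eq, Finset.mem_coe, Finset.mem_sdiff,
        Finset.mem_filter]
      tauto
    have e2 : {j : ℕ | p ≤ j ∧ ColPureA i (restrictTwo i T) j} =
        ((A.filter (fun j => p ≤ j) \ B.filter (fun j => p ≤ j) : Finset ℕ) : Set ℕ) := by
      ext j
      simp only [ColPureA, hA', hB', Set.mem_ofPred_eq, Finset.mem_coe, Finset.mem_sdiff,
        Finset.mem_filter]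
      tauto
    unfold fsuffix
    rw [e1, e2, Set.ncard_coe_finset, Set.ncard_coe_finset]
    have h1 := Finset.card_sdiff_add_card_inter
      (B.filter (fun j => p ≤ j)) (A.filter (fun j => p ≤ j))
    have h2 := Finset.card_sdiff_add_card_inter
      (A.filter (fun j => p ≤ j)) (B.filter (fun j => p ≤ j))
    rw [Finset.inter_comm] at h2
    omega
  unfold eOp
  rw [dif_neg]
  rintro ⟨T', c, S', ⟨-, -, h3⟩, -⟩
  have hbig : ∀ X : Finset ℕ, ∀ p, X.sup id < p → X.filter (fun j => p ≤ j) = ∅ := by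
    intro X p hp
    apply Finset.filter_eq_empty_iff.mpr
    intro j hj
    have := Finset.le_sup (f := id) hj
    simp only [id] at this
    omega
  have h4 := h3 (A.sup id + B.sup id + c + 1) (by omega)
  rw [hf, hf, hbig A _ (by omega), hbig B _ (by omega)] at h4
  have := h c
  simp only [Finset.card_empty] at h4
  omega

end HW

/-- For any partition `lam`, any `n ≥ 1` and any partition `ρ` with
`(λ_1) ⊆ ρ ⊆ λ̄^{(n)}` (i.e. `ρ_1 ≥ λ_1` and `ρ_v ≤ λ̄^{(n)}_v` for all `v`), there is a
highest weight element `T ∈ SVRPP^n(lam)` with `wt(T) = ρ`. (Parts of `ρ` are 1-indexed;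
`ρ 0 = 0` by convention.) -/
theorem exists_highest_weight_of_between (lam : ℕ → ℕ) (hlam : IsPartitionFun lam)
    (n : ℕ) (hn : 1 ≤ n) (ρ : ℕ → ℕ)
    (hρ0 : ρ 0 = 0) (hρdec : ∀ v, 1 ≤ v → ρ (v + 1) ≤ ρ v)
    (hlow : lam 0 ≤ ρ 1) (hhigh : ∀ v, ρ v ≤ barLam lam n v) :
    ∃ T : ℕ → ℕ → Finset ℕ,
      IsSVRPPn lam (fun _ => 0) n T ∧
      (∀ i, 1 ≤ i → i < n → eOp i T = none) ∧
      (∀ v, ircont T v = ρ v) := by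
  have hanti : Antitone lam := antitone_nat_of_succ_le hlam.1
  have hle : ∀ v, ρ v ≤ (HW.C lam v).card := by
    intro v
    rcases Nat.eq_zero_or_pos v with rfl | hv
    · omega
    · exact (hhigh v).trans (HW.C_card lam n v hv)
  choose q hq using fun v => HW.exists_cut (HW.C lam v) (ρ v) (hle v)
  have hq' : ∀ v, (HW.Cq lam q v).card = ρ v := hq
  have hout : ∀ v, ¬ (1 ≤ v ∧ v ≤ n) → HW.Cq lam q v = ∅ := by
    intro v hv
    rw [← Finset.card_eq_zero, hq']
    have := hhigh v
    simp only [barLam, hv, if_false] at this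
    omega
  have hC1 : HW.C lam 1 ⊆ Finset.range (lam 0) := Finset.filter_subset _ _
  have hcol : ∀ v j, (∃ r, v ∈ HW.T lam q n r j) ↔ j ∈ HW.Cq lam q v :=
    fun v j => HW.mem_col lam q n v j (hout v)
  have hone : ∀ j, j < lam 0 → q 1 ≤ j := by
    intro j hj
    have hs : HW.Cq lam q 1 ⊆ Finset.range (lam 0) := (Finset.filter_subset _ _).trans hC1
    have he : HW.Cq lam q 1 = Finset.range (lam 0) := by
      apply Finset.eq_of_subset_of_card_le hs
      rw [hq', Finset.card_range]
      exact hlow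
    have : j ∈ HW.Cq lam q 1 := by rw [he]; simpa using hj
    exact (Finset.mem_filter.mp this).2
  have hsub : ∀ i j, HW.T lam q n i j ⊆ Finset.Icc 1 n :=
    fun i j => (HW.T_sub _ _ _ _ _).trans (Finset.filter_subset _ _)
  refine ⟨HW.T lam q n, ⟨⟨?_, ?_, ?_, ?_, ?_⟩, hsub⟩, ?_, ?_⟩
  · intro i j h
    have : ¬ j < lam i := fun h' => h ⟨Nat.zero_le _, h'⟩
    simp [HW.T, this]
  · rintro i j ⟨-, h⟩
    have h' : j < lam i := h
    simp only [HW.T, h', if_true]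
    split_ifs with hD
    · exact hD
    · have hl := hanti (Nat.zero_le i)
      have h1 : 1 ∈ HW.U lam q n i j := by
        simp only [HW.U, Finset.mem_filter, Finset.mem_Icc]
        exact ⟨⟨le_rfl, hn⟩, hone j (by omega), Or.inl ⟨by omega, by simp only [Nat.sub_self, flatPart]; omega⟩⟩
      have hne : (HW.U lam q n i j).Nonempty := ⟨1, h1⟩
      refine ⟨(HW.U lam q n i j).max' hne, Finset.mem_filter.mpr ⟨Finset.max'_mem _ _, ?_⟩⟩
      intro w hw
      exact Finset.le_max' _ _ hw
  · intro i j x hx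
    exact (Finset.mem_Icc.mp (hsub i j hx)).1
  · rintro i j - ⟨-, h⟩ a ha b hb
    exact HW.row lam q hanti n i j a b h (HW.T_sub _ _ _ _ _ ha) hb
  · rintro i j - - a ha b hb
    exact HW.col lam q n i j a b (HW.T_sub _ _ _ _ _ ha) hb
  · intro i hi _
    refine HW.eOp_none i _ (HW.Cq lam q i) (HW.Cq lam q (i + 1)) (hcol i) (hcol (i + 1)) ?_
    intro p
    by_cases hp : q i ≤ p
    · apply Finset.card_le_card
      intro j hj
      simp only [HW.Cq, Finset.mem_filter] at hj ⊢
      exact ⟨⟨HW.C_succ lam i hi hj.1.1, by omega⟩, hj.2⟩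
    · have e : (HW.Cq lam q i).filter (fun j => p ≤ j) = HW.Cq lam q i := by
        apply Finset.filter_true_of_mem
        intro j hj
        have := (Finset.mem_filter.mp hj).2
        omega
      rw [e, hq']
      refine (Finset.card_le_card (Finset.filter_subset _ _)).trans ?_
      rw [hq']
      exact hρdec i hi
  · intro v
    have : {j : ℕ | ∃ i, v ∈ HW.T lam q n i j} = ((HW.Cq lam q v : Finset ℕ) : Set ℕ) := by
      ext j
      simp only [Set.mem_ofPred_eq, hcol, Finset.mem_coe]
    unfold ircont
    rw [this, Set.ncard_coe_finset, hq']
end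

section
/- For any partition λ and any n ≥ 1, if T ∈ SVRPP^n(λ) is a highest weight element with wt(T) = ρ, then ρ is a partition satisfying (λ_1) ⊆ ρ ⊆ λ̄^{(n)}, that is, ρ_1 = λ_1 and ρ_i ≤ λ̄^{(n)}_i for all i. -/
open scoped Classical

section aux

theorem aux_anti {lam : ℕ → ℕ} (h : IsPartitionFun lam) {r r' : ℕ} (hr : r ≤ r') :
    lam r' ≤ lam r := antitone_nat_of_succ_le h.1 hr

theorem aux_mem_s17 {lam : ℕ → ℕ} {T : ℕ → ℕ → Finset ℕ} (hT : IsSVRPP lam (fun _ => 0) T)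
    {r j x : ℕ} (hx : x ∈ T r j) : j < lam r := by
  by_contra hc
  have := hT.1 r j (by simp only [InShape]; omega)
  rw [this] at hx
  simp at hx

theorem aux_ne {lam : ℕ → ℕ} {T : ℕ → ℕ → Finset ℕ} (hT : IsSVRPP lam (fun _ => 0) T)
    {r j : ℕ} (h : j < lam r) : ∃ x, x ∈ T r j :=
  hT.2.1 r j ⟨Nat.zero_le _, h⟩

theorem aux_row {lam : ℕ → ℕ} {T : ℕ → ℕ → Finset ℕ}
    (hT : IsSVRPP lam (fun _ => 0) T) {r j x : ℕ} (hx : x ∈ T r j) :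
    ∀ d, 1 ≤ d → ∀ y, y ∈ T r (j + d) → x ≤ y := by
  intro d hd
  induction d, hd using Nat.le_induction with
  | base =>
    intro y hy
    exact hT.2.2.2.1 r j ⟨Nat.zero_le _, aux_mem_s17 hT hx⟩ ⟨Nat.zero_le _, aux_mem_s17 hT hy⟩ x hx y hy
  | succ d hd ih =>
    intro y hy
    have h1 := aux_mem_s17 hT hy
    obtain ⟨z, hz⟩ := aux_ne hT (r := r) (j := j + d) (by omega)
    exact (ih z hz).trans (hT.2.2.2.1 r (j+d) ⟨Nat.zero_le _, aux_mem_s17 hT hz⟩ ⟨Nat.zero_le _, h1⟩ z hz y hy)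

theorem aux_col_s17 {lam : ℕ → ℕ} (hlam : IsPartitionFun lam) {T : ℕ → ℕ → Finset ℕ}
    (hT : IsSVRPP lam (fun _ => 0) T) {r j x : ℕ} (hx : x ∈ T r j) :
    ∀ d, 1 ≤ d → ∀ y, y ∈ T (r + d) j → x ≤ y := by
  intro d hd
  induction d, hd using Nat.le_induction with
  | base =>
    intro y hy
    exact hT.2.2.2.2 r j ⟨Nat.zero_le _, aux_mem_s17 hT hx⟩ ⟨Nat.zero_le _, aux_mem_s17 hT hy⟩ x hx y hy
  | succ d hd ih =>
    intro y hy
    have h1 := aux_mem_s17 hT hy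
    have h2 : lam (r + (d+1)) ≤ lam (r + d) := aux_anti hlam (by omega)
    obtain ⟨z, hz⟩ := aux_ne hT (r := r + d) (j := j) (by omega)
    exact (ih z hz).trans (hT.2.2.2.2 (r+d) j ⟨Nat.zero_le _, aux_mem_s17 hT hz⟩ ⟨Nat.zero_le _, h1⟩ z hz y hy)

/-- entries weakly increase to the south-east -/
theorem aux_le {lam : ℕ → ℕ} (hlam : IsPartitionFun lam) {T : ℕ → ℕ → Finset ℕ}
    (hT : IsSVRPP lam (fun _ => 0) T) {r j x r' j' y : ℕ} (hx : x ∈ T r j) (hy : y ∈ T r' j')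
    (hr : r ≤ r') (hj : j ≤ j') (hne : r < r' ∨ j < j') : x ≤ y := by
  have h1 := aux_mem_s17 hT hy
  have h2 := aux_anti hlam hr
  obtain ⟨d, rfl⟩ := Nat.exists_eq_add_of_le hr
  obtain ⟨e, rfl⟩ := Nat.exists_eq_add_of_le hj
  rcases Nat.eq_zero_or_pos d with hd | hd
  · subst hd
    exact aux_row hT hx e (by omega) y hy
  · rcases Nat.eq_zero_or_pos e with he | he
    · subst he
      exact aux_col_s17 hlam hT hx d hd y hy
    · obtain ⟨z, hz⟩ := aux_ne hT (r := r) (j := j + e) (by omega)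
      exact (aux_row hT hx e he z hz).trans (aux_col_s17 hlam hT hz d hd y hy)

structure BReg (R : ℕ → ℕ → Prop) (W H : ℕ) : Prop where
  conv : ∀ r j r' j' s k, R r j → R r' j' → r ≤ s → s ≤ r' → j ≤ k → k ≤ j' → R s k
  wid : ∀ r j, R r j → j < W
  hei : ∀ r j, R r j → r < H

structure BInv (a : ℕ) (R : ℕ → ℕ → Prop) (S : ℕ → ℕ → Finset ℕ) : Prop where
  ne : ∀ r j, R r j → a ∈ S r j ∨ a + 1 ∈ S r j
  sub : ∀ r j x, x ∈ S r j → R r j ∧ (x = a ∨ x = a + 1)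
  col : ∀ r r' j, a + 1 ∈ S r j → a ∈ S r' j → r' ≤ r
  mix : ∀ j j', j < j' → ColMixed a S j → ColMixed a S j' →
    ∀ r r', a + 1 ∈ S r j → a ∈ S r' j' → r' < r

noncomputable def wcol (a : ℕ) (S : ℕ → ℕ → Finset ℕ) (j : ℕ) : ℕ :=
  (if ColHas S j a then 0 else 1) + (if ColHas S j (a + 1) then 1 else 0)

noncomputable def muW (a W : ℕ) (S : ℕ → ℕ → Finset ℕ) : ℕ :=
  ∑ j ∈ Finset.range W, (W - j) * wcol a S j

theorem mu_lt (a W : ℕ) (S S' : ℕ → ℕ → Finset ℕ) (k : ℕ) (hk : k + 1 < W)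
    (h1 : wcol a S' k = wcol a S (k+1)) (h2 : wcol a S' (k+1) = wcol a S k)
    (h3 : wcol a S (k+1) < wcol a S k)
    (h4 : ∀ j, j ≠ k → j ≠ k + 1 → wcol a S' j = wcol a S j) : muW a W S' < muW a W S := by
  have key : ∀ S : ℕ → ℕ → Finset ℕ, muW a W S = (W - k) * wcol a S k +
      ((W - (k+1)) * wcol a S (k+1) +
        ∑ j ∈ ((Finset.range W).erase k).erase (k+1), (W - j) * wcol a S j) := by
    intro S
    unfold muW
    rw [Finset.add_sum_erase _ (fun j => (W - j) * wcol a S j) (by simp; omega),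
      Finset.add_sum_erase _ (fun j => (W - j) * wcol a S j) (by simp; omega)]
  rw [key S, key S', h1, h2]
  have : ∑ j ∈ ((Finset.range W).erase k).erase (k+1), (W - j) * wcol a S' j
    = ∑ j ∈ ((Finset.range W).erase k).erase (k+1), (W - j) * wcol a S j := by
    apply Finset.sum_congr rfl
    intro j hj
    simp only [Finset.mem_erase] at hj
    rw [h4 j hj.2.1 hj.1]
  rw [this]
  obtain ⟨c, hc⟩ : ∃ c, W - (k+1) = c := ⟨_, rfl⟩
  have hc' : W - k = c + 1 := by omega
  rw [hc, hc']
  nlinarith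

theorem colhas_other {S S' : ℕ → ℕ → Finset ℕ} {j : ℕ} (h : ∀ r, S' r j = S r j) (x : ℕ) :
    ColHas S' j x ↔ ColHas S j x := by simp [ColHas, h]

theorem reg_edges {R : ℕ → ℕ → Prop} {W H : ℕ} (hR : BReg R W H) {r r' j : ℕ} (h : R r j)
    (h' : R r' (j+1)) : (r ≤ r' → R r (j+1) ∧ R r' j) := fun hr =>
  ⟨hR.conv _ _ _ _ _ _ h h' le_rfl hr (by omega) le_rfl,
   hR.conv _ _ _ _ _ _ h h' hr le_rfl le_rfl (by omega)⟩

theorem step_M1 {a W H : ℕ} {R : ℕ → ℕ → Prop} (hR : BReg R W H) {S : ℕ → ℕ → Finset ℕ}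
    (hS : BInv a R S) {k : ℕ} (hd : Descent a S k) (hM : ColMixed a S k)
    (hA : ColPureA a S (k+1)) :
    BInv a R (resFun a S k) ∧ muW a W (resFun a S k) < muW a W S := by
  obtain ⟨S', hS'⟩ : ∃ S', S' = resFun a S k := ⟨_, rfl⟩
  obtain ⟨x, hx⟩ : ∃ x, x = sep a S k := ⟨_, rfl⟩
  have e0 : ∀ r, S' r k = (S r k).image (fun _ => a) := by
    intro r; rw [hS']; simp [resFun, hM, hA]
  have e1 : ∀ r, S' r (k+1) = (if (S r (k+1)).Nonempty then
            (if r < x then {a} else if r = x then S r k else {a + 1}) else ∅) := by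
    intro r; rw [hS', hx]; simp [resFun, hM, hA]
  have e2 : ∀ j, j ≠ k → j ≠ k + 1 → ∀ r, S' r j = S r j := by
    intro j h1 h2 r; rw [hS']; simp [resFun, hM, hA, h1, h2]
  rw [← hS']
  have hxm : a + 1 ∈ S x k := by
    rw [hx]; exact Nat.sInf_mem (s := {r | a + 1 ∈ S r k}) hM.2
  have hxle : ∀ r, a + 1 ∈ S r k → x ≤ r := by
    intro r hr; rw [hx]; exact Nat.sInf_le (s := {r | a + 1 ∈ S r k}) hr
  obtain ⟨rd, hd1, hd2⟩ := hd
  obtain ⟨s, hs⟩ := hM.1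
  have Rx := (hS.sub _ _ _ hxm).1
  have Rd := (hS.sub _ _ _ hd2).1
  have Rs := (hS.sub _ _ _ hs).1
  have hsx : s ≤ x := hS.col _ _ _ hxm hs
  have hxd : x ≤ rd := hxle _ hd1
  have Rx1 : R x (k+1) := (reg_edges hR Rx Rd hxd).1
  have Rs1 : R s (k+1) := (reg_edges hR Rs Rd (hsx.trans hxd)).1
  have hne : ∀ r j, (S r j).Nonempty ↔ R r j := fun r j =>
    ⟨fun ⟨y, hy⟩ => (hS.sub _ _ _ hy).1, fun h => (hS.ne _ _ h).elim (fun h => ⟨_, h⟩) (fun h => ⟨_, h⟩)⟩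
  have f0 : ∀ r y, y ∈ S' r k ↔ R r k ∧ y = a := by
    intro r y; rw [e0, ← hne]; simp [Finset.mem_image, Finset.Nonempty, eq_comm]
  have f1 : ∀ r y, y ∈ S' r (k+1) ↔ R r (k+1) ∧
      ((r < x ∧ y = a) ∨ (r = x ∧ y ∈ S x k) ∨ (x < r ∧ y = a + 1)) := by
    intro r y; rw [e1, ← hne]
    by_cases h : (S r (k+1)).Nonempty
    · rcases lt_trichotomy r x with h1 | h1 | h1
      · simp [h, h1, h1.ne, h1.le]
      · subst h1; simp [h]
      · simp [h, h1, h1.ne', h1.not_gt]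
    · simp [h]
  have g1 : ColHas S' (k+1) (a+1) := ⟨x, by rw [f1]; exact ⟨Rx1, .inr (.inl ⟨rfl, hxm⟩)⟩⟩
  have g0 : ColHas S' (k+1) a := by
    refine ⟨s, ?_⟩
    rw [f1]
    refine ⟨Rs1, ?_⟩
    rcases hsx.lt_or_eq with h | h
    · exact .inl ⟨h, rfl⟩
    · exact .inr (.inl ⟨h, h ▸ hs⟩)
  have g2 : ColHas S' k a := ⟨x, by rw [f0]; exact ⟨Rx, rfl⟩⟩
  have g3 : ¬ ColHas S' k (a+1) := by
    rintro ⟨r, hr⟩; rw [f0] at hr; omega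
  constructor
  · -- transfer
    have t1 : ∀ r, a + 1 ∈ S' r (k+1) → ∃ r' ≤ r, a + 1 ∈ S r' k := by
      intro r hr
      rw [f1] at hr
      exact ⟨x, by omega, hxm⟩
    have t0 : ∀ r, a ∈ S' r (k+1) → ∃ r' ≥ r, a ∈ S r' k := by
      intro r hr
      rw [f1] at hr
      rcases hr with ⟨hr, h | h | h⟩
      · by_cases hsr : r ≤ s
        · exact ⟨s, hsr, hs⟩
        · have : R r k := hR.conv _ _ _ _ r k Rs Rx (by omega) h.1.le le_rfl le_rfl
          rcases hS.ne _ _ this with h' | h'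
          · exact ⟨r, le_rfl, h'⟩
          · have := hxle _ h'; omega
      · exact ⟨x, h.1.le, h.2⟩
      · omega
    refine ⟨?_, ?_, ?_, ?_⟩
    · intro r j hr
      by_cases h1 : j = k
      · subst h1; left; rw [f0]; exact ⟨hr, rfl⟩
      by_cases h2 : j = k + 1
      · subst h2
        rcases lt_trichotomy r x with h | h | h
        · left; rw [f1]; exact ⟨hr, .inl ⟨h, rfl⟩⟩
        · right; rw [f1]; exact ⟨hr, .inr (.inl ⟨h, hxm⟩)⟩
        · right; rw [f1]; exact ⟨hr, .inr (.inr ⟨h, rfl⟩)⟩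
      rw [e2 j h1 h2]; exact hS.ne _ _ hr
    · intro r j y hy
      by_cases h1 : j = k
      · subst h1; rw [f0] at hy; exact ⟨hy.1, .inl hy.2⟩
      by_cases h2 : j = k + 1
      · subst h2; rw [f1] at hy
        refine ⟨hy.1, ?_⟩
        rcases hy.2 with h | h | h
        · exact .inl h.2
        · exact (hS.sub _ _ _ h.2).2
        · exact .inr h.2
      rw [e2 j h1 h2] at hy; exact hS.sub _ _ _ hy
    · intro r r' j h h'
      by_cases h1 : j = k
      · subst h1; rw [f0] at h; omega
      by_cases h2 : j = k + 1
      · subst h2; rw [f1] at h h'; omega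
      rw [e2 j h1 h2] at h h'; exact hS.col _ _ _ h h'
    · intro j j' hjj hm hm' r r' hr hr'
      have n1 : j ≠ k := by rintro rfl; exact g3 hm.2
      have n2 : j' ≠ k := by rintro rfl; exact g3 hm'.2
      have keep : ∀ j, j ≠ k → j ≠ k + 1 → ColMixed a S' j → ColMixed a S j := by
        intro j h1 h2 h
        exact ⟨(colhas_other (e2 j h1 h2) _).1 h.1, (colhas_other (e2 j h1 h2) _).1 h.2⟩
      by_cases h1 : j = k + 1
      · subst h1
        obtain ⟨q, hq, hq'⟩ := t1 r hr
        have h3 : j' ≠ k + 1 := by omega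
        rw [e2 j' n2 h3] at hr'
        have := hS.mix k j' (by omega) hM (keep j' n2 h3 hm') q r' hq' hr'
        omega
      · by_cases h2 : j' = k + 1
        · subst h2
          obtain ⟨q, hq, hq'⟩ := t0 r' hr'
          rw [e2 j n1 h1] at hr
          have := hS.mix j k (by omega) (keep j n1 h1 hm) hM r q hr hq'
          omega
        · rw [e2 j n1 h1] at hr
          rw [e2 j' n2 h2] at hr'
          exact hS.mix j j' hjj (keep j n1 h1 hm) (keep j' n2 h2 hm') r r' hr hr'
  · refine mu_lt a W S S' k (hR.wid _ _ Rd) ?_ ?_ ?_ ?_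
    · simp [wcol, g2, g3, hA.1, hA.2]
    · simp [wcol, g0, g1, hM.1, hM.2]
    · simp [wcol, hA.1, hA.2, hM.1, hM.2]
    · intro j h1 h2
      simp [wcol, colhas_other (e2 j h1 h2)]

theorem step_2M {a W H : ℕ} {R : ℕ → ℕ → Prop} (hR : BReg R W H) {S : ℕ → ℕ → Finset ℕ}
    (hS : BInv a R S) {k : ℕ} (hd : Descent a S k) (hB : ColPureB a S k)
    (hM : ColMixed a S (k+1)) :
    BInv a R (resFun a S k) ∧ muW a W (resFun a S k) < muW a W S := by
  obtain ⟨S', hS'⟩ : ∃ S', S' = resFun a S k := ⟨_, rfl⟩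
  obtain ⟨x, hx⟩ : ∃ x, x = botA a S (k+1) := ⟨_, rfl⟩
  have nM : ¬ ColMixed a S k := fun h => hB.2 h.1
  have e0 : ∀ r, S' r (k+1) = (S r (k+1)).image (fun _ => a+1) := by
    intro r; rw [hS']; simp [resFun, hM, hB, nM]
  have e1 : ∀ r, S' r k = (if (S r k).Nonempty then
            (if r < x then {a} else if r = x then S r (k+1) else {a + 1}) else ∅) := by
    intro r; rw [hS', hx]; simp [resFun, hM, hB, nM]
  have e2 : ∀ j, j ≠ k → j ≠ k + 1 → ∀ r, S' r j = S r j := by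
    intro j h1 h2 r; rw [hS']; simp [resFun, hM, hB, nM, h1, h2]
  rw [← hS']
  have bdd : BddAbove {r | a ∈ S r (k+1)} :=
    ⟨H, fun r hr => (hR.hei _ _ (hS.sub _ _ _ hr).1).le⟩
  have hxm : a ∈ S x (k+1) := by
    rw [hx]; exact Nat.sSup_mem (s := {r | a ∈ S r (k+1)}) hM.1 bdd
  have hxle : ∀ r, a ∈ S r (k+1) → r ≤ x := by
    intro r hr; rw [hx]; exact le_csSup bdd hr
  obtain ⟨rd, hd1, hd2⟩ := hd
  obtain ⟨s, hs⟩ := hM.2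
  have Rx := (hS.sub _ _ _ hxm).1
  have Rd := (hS.sub _ _ _ hd1).1
  have Rs := (hS.sub _ _ _ hs).1
  have hsx : x ≤ s := hS.col _ _ _ hs hxm
  have hxd : rd ≤ x := hxle _ hd2
  have Rx1 : R x k := (reg_edges hR Rd Rx hxd).2
  have Rs1 : R s k := (reg_edges hR Rd Rs (hxd.trans hsx)).2
  have hne : ∀ r j, (S r j).Nonempty ↔ R r j := fun r j =>
    ⟨fun ⟨y, hy⟩ => (hS.sub _ _ _ hy).1, fun h => (hS.ne _ _ h).elim (fun h => ⟨_, h⟩) (fun h => ⟨_, h⟩)⟩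
  have f0 : ∀ r y, y ∈ S' r (k+1) ↔ R r (k+1) ∧ y = a+1 := by
    intro r y; rw [e0, ← hne]; simp [Finset.mem_image, Finset.Nonempty, eq_comm]
  have f1 : ∀ r y, y ∈ S' r k ↔ R r k ∧
      ((r < x ∧ y = a) ∨ (r = x ∧ y ∈ S x (k+1)) ∨ (x < r ∧ y = a + 1)) := by
    intro r y; rw [e1, ← hne]
    by_cases h : (S r k).Nonempty
    · rcases lt_trichotomy r x with h1 | h1 | h1
      · simp [h, h1, h1.ne, h1.le]
      · subst h1; simp [h]
      · simp [h, h1, h1.ne', h1.not_gt]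
    · simp [h]
  have g1 : ColHas S' k a := ⟨x, by rw [f1]; exact ⟨Rx1, .inr (.inl ⟨rfl, hxm⟩)⟩⟩
  have g0 : ColHas S' k (a+1) := by
    refine ⟨s, ?_⟩
    rw [f1]
    refine ⟨Rs1, ?_⟩
    rcases hsx.lt_or_eq with h | h
    · exact .inr (.inr ⟨h, rfl⟩)
    · exact .inr (.inl ⟨h.symm, h ▸ hs⟩)
  have g2 : ColHas S' (k+1) (a+1) := ⟨x, by rw [f0]; exact ⟨Rx, rfl⟩⟩
  have g3 : ¬ ColHas S' (k+1) a := by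
    rintro ⟨r, hr⟩; rw [f0] at hr; omega
  constructor
  · have t1 : ∀ r, a ∈ S' r k → ∃ r' ≥ r, a ∈ S r' (k+1) := by
      intro r hr
      rw [f1] at hr
      exact ⟨x, by omega, hxm⟩
    have t0 : ∀ r, a + 1 ∈ S' r k → ∃ r' ≤ r, a + 1 ∈ S r' (k+1) := by
      intro r hr
      rw [f1] at hr
      rcases hr with ⟨hr, h | h | h⟩
      · omega
      · exact ⟨x, h.1.ge, h.2⟩
      · by_cases hsr : s ≤ r
        · exact ⟨s, hsr, hs⟩
        · have : R r (k+1) := hR.conv _ _ _ _ r (k+1) Rx Rs h.1.le (by omega) le_rfl le_rfl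
          rcases hS.ne _ _ this with h' | h'
          · have := hxle _ h'; omega
          · exact ⟨r, le_rfl, h'⟩
    refine ⟨?_, ?_, ?_, ?_⟩
    · intro r j hr
      by_cases h1 : j = k + 1
      · subst h1; right; rw [f0]; exact ⟨hr, rfl⟩
      by_cases h2 : j = k
      · subst h2
        rcases lt_trichotomy r x with h | h | h
        · left; rw [f1]; exact ⟨hr, .inl ⟨h, rfl⟩⟩
        · left; rw [f1]; exact ⟨hr, .inr (.inl ⟨h, hxm⟩)⟩
        · right; rw [f1]; exact ⟨hr, .inr (.inr ⟨h, rfl⟩)⟩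
      rw [e2 j h2 h1]; exact hS.ne _ _ hr
    · intro r j y hy
      by_cases h1 : j = k + 1
      · subst h1; rw [f0] at hy; exact ⟨hy.1, .inr hy.2⟩
      by_cases h2 : j = k
      · subst h2; rw [f1] at hy
        refine ⟨hy.1, ?_⟩
        rcases hy.2 with h | h | h
        · exact .inl h.2
        · exact (hS.sub _ _ _ h.2).2
        · exact .inr h.2
      rw [e2 j h2 h1] at hy; exact hS.sub _ _ _ hy
    · intro r r' j h h'
      by_cases h1 : j = k + 1
      · subst h1; rw [f0] at h'; omega
      by_cases h2 : j = k
      · subst h2; rw [f1] at h h'; omega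
      rw [e2 j h2 h1] at h h'; exact hS.col _ _ _ h h'
    · intro j j' hjj hm hm' r r' hr hr'
      have n1 : j ≠ k + 1 := by rintro rfl; exact g3 hm.1
      have n2 : j' ≠ k + 1 := by rintro rfl; exact g3 hm'.1
      have keep : ∀ j, j ≠ k → j ≠ k + 1 → ColMixed a S' j → ColMixed a S j := by
        intro j h1 h2 h
        exact ⟨(colhas_other (e2 j h1 h2) _).1 h.1, (colhas_other (e2 j h1 h2) _).1 h.2⟩
      by_cases h1 : j = k
      · subst h1
        obtain ⟨q, hq, hq'⟩ := t0 r hr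
        have h3 : j' ≠ j := by omega
        rw [e2 j' h3 n2] at hr'
        have := hS.mix (j+1) j' (by omega) hM (keep j' h3 n2 hm') q r' hq' hr'
        omega
      · by_cases h2 : j' = k
        · subst h2
          obtain ⟨q, hq, hq'⟩ := t1 r' hr'
          rw [e2 j h1 n1] at hr
          have := hS.mix j (j'+1) (by omega) (keep j h1 n1 hm) hM r q hr hq'
          omega
        · rw [e2 j h1 n1] at hr
          rw [e2 j' h2 n2] at hr'
          exact hS.mix j j' hjj (keep j h1 n1 hm) (keep j' h2 n2 hm') r r' hr hr'
  · refine mu_lt a W S S' k (hR.wid _ _ Rx) ?_ ?_ ?_ ?_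
    · simp [wcol, g0, g1, hM.1, hM.2]
    · simp [wcol, g2, g3, hB.1, hB.2]
    · simp [wcol, hB.1, hB.2, hM.1, hM.2]
    · intro j h1 h2
      simp [wcol, colhas_other (e2 j h1 h2)]

theorem step_21 {a W H : ℕ} {R : ℕ → ℕ → Prop} (hR : BReg R W H) {S : ℕ → ℕ → Finset ℕ}
    (hS : BInv a R S) {k : ℕ} (hd : Descent a S k) (hB : ColPureB a S k)
    (hA : ColPureA a S (k+1)) :
    BInv a R (resFun a S k) ∧ muW a W (resFun a S k) < muW a W S := by
  obtain ⟨S', hS'⟩ : ∃ S', S' = resFun a S k := ⟨_, rfl⟩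
  have nM : ¬ ColMixed a S k := fun h => hB.2 h.1
  have nM' : ¬ ColMixed a S (k+1) := fun h => hA.2 h.2
  have e0 : ∀ r, S' r (k+1) = (S r (k+1)).image (fun _ => a+1) := by
    intro r; rw [hS']; simp [resFun, hA, hB, nM, nM']
  have e1 : ∀ r, S' r k = (S r k).image (fun _ => a) := by
    intro r; rw [hS']; simp [resFun, hA, hB, nM, nM']
  have e2 : ∀ j, j ≠ k → j ≠ k + 1 → ∀ r, S' r j = S r j := by
    intro j h1 h2 r; rw [hS']; simp [resFun, hA, hB, nM, nM', h1, h2]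
  rw [← hS']
  have hne : ∀ r j, (S r j).Nonempty ↔ R r j := fun r j =>
    ⟨fun ⟨y, hy⟩ => (hS.sub _ _ _ hy).1, fun h => (hS.ne _ _ h).elim (fun h => ⟨_, h⟩) (fun h => ⟨_, h⟩)⟩
  have f0 : ∀ r y, y ∈ S' r (k+1) ↔ R r (k+1) ∧ y = a+1 := by
    intro r y; rw [e0, ← hne]; simp [Finset.mem_image, Finset.Nonempty, eq_comm]
  have f1 : ∀ r y, y ∈ S' r k ↔ R r k ∧ y = a := by
    intro r y; rw [e1, ← hne]; simp [Finset.mem_image, Finset.Nonempty, eq_comm]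
  obtain ⟨rd, hd1, hd2⟩ := hd
  have R0 := (hS.sub _ _ _ hd1).1
  have R1 := (hS.sub _ _ _ hd2).1
  have g0 : ColHas S' k a := ⟨rd, (f1 _ _).2 ⟨R0, rfl⟩⟩
  have g1 : ¬ ColHas S' k (a+1) := by rintro ⟨r, hr⟩; rw [f1] at hr; omega
  have g2 : ColHas S' (k+1) (a+1) := ⟨rd, (f0 _ _).2 ⟨R1, rfl⟩⟩
  have g3 : ¬ ColHas S' (k+1) a := by rintro ⟨r, hr⟩; rw [f0] at hr; omega
  constructor
  · refine ⟨?_, ?_, ?_, ?_⟩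
    · intro r j hr
      by_cases h1 : j = k + 1
      · subst h1; right; rw [f0]; exact ⟨hr, rfl⟩
      by_cases h2 : j = k
      · subst h2; left; rw [f1]; exact ⟨hr, rfl⟩
      rw [e2 j h2 h1]; exact hS.ne _ _ hr
    · intro r j y hy
      by_cases h1 : j = k + 1
      · subst h1; rw [f0] at hy; exact ⟨hy.1, .inr hy.2⟩
      by_cases h2 : j = k
      · subst h2; rw [f1] at hy; exact ⟨hy.1, .inl hy.2⟩
      rw [e2 j h2 h1] at hy; exact hS.sub _ _ _ hy
    · intro r r' j h h'
      by_cases h1 : j = k + 1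
      · subst h1; rw [f0] at h'; omega
      by_cases h2 : j = k
      · subst h2; rw [f1] at h; omega
      rw [e2 j h2 h1] at h h'; exact hS.col _ _ _ h h'
    · intro j j' hjj hm hm' r r' hr hr'
      have n1 : j ≠ k + 1 := by rintro rfl; exact g3 hm.1
      have n2 : j' ≠ k + 1 := by rintro rfl; exact g3 hm'.1
      have n3 : j ≠ k := by rintro rfl; exact g1 hm.2
      have n4 : j' ≠ k := by rintro rfl; exact g1 hm'.2
      have keep : ∀ j, j ≠ k → j ≠ k + 1 → ColMixed a S' j → ColMixed a S j := by
        intro j h1 h2 h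
        exact ⟨(colhas_other (e2 j h1 h2) _).1 h.1, (colhas_other (e2 j h1 h2) _).1 h.2⟩
      rw [e2 j n3 n1] at hr
      rw [e2 j' n4 n2] at hr'
      exact hS.mix j j' hjj (keep j n3 n1 hm) (keep j' n4 n2 hm') r r' hr hr'
  · refine mu_lt a W S S' k (hR.wid _ _ R1) ?_ ?_ ?_ ?_
    · simp [wcol, g0, g1, hA.1, hA.2]
    · simp [wcol, g2, g3, hB.1, hB.2]
    · simp [wcol, hA.1, hA.2, hB.1, hB.2]
    · intro j h1 h2
      simp [wcol, colhas_other (e2 j h1 h2)]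

theorem step_any {a W H : ℕ} {R : ℕ → ℕ → Prop} (hR : BReg R W H) {S : ℕ → ℕ → Finset ℕ}
    (hS : BInv a R S) {k : ℕ} (hd : Descent a S k) :
    BInv a R (resFun a S k) ∧ muW a W (resFun a S k) < muW a W S := by
  obtain ⟨r, h1, h2⟩ := id hd
  have c1 : ColHas S k (a+1) := ⟨r, h1⟩
  have c2 : ColHas S (k+1) a := ⟨r, h2⟩
  by_cases d1 : ColHas S k a <;> by_cases d2 : ColHas S (k+1) (a+1)
  · have := hS.mix k (k+1) (by omega) ⟨d1, c1⟩ ⟨c2, d2⟩ r r h1 h2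
    omega
  · exact step_M1 hR hS hd ⟨d1, c1⟩ ⟨c2, d2⟩
  · exact step_2M hR hS hd ⟨c1, d1⟩ ⟨c2, d2⟩
  · exact step_21 hR hS hd ⟨c1, d1⟩ ⟨c2, d2⟩

theorem resolve {a W H : ℕ} {R : ℕ → ℕ → Prop} (hR : BReg R W H) :
    ∀ m (S : ℕ → ℕ → Finset ℕ), muW a W S ≤ m → BInv a R S →
    ∃ S', Relation.ReflTransGen (ResStep a) S S' ∧ ∀ k, ¬ Descent a S' k := by
  intro m
  induction m with
  | zero =>
    intro S hm hS
    refine ⟨S, .refl, fun k hk => ?_⟩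
    have := (step_any hR hS hk).2
    omega
  | succ m ih =>
    intro S hm hS
    by_cases h : ∃ k, Descent a S k
    · obtain ⟨k, hk⟩ := h
      obtain ⟨h1, h2⟩ := step_any hR hS hk
      obtain ⟨S', h3, h4⟩ := ih _ (by omega) h1
      exact ⟨S', .head ⟨k, hk, rfl⟩ h3, h4⟩
    · exact ⟨S, .refl, fun k hk => h ⟨k, hk⟩⟩

theorem mem_rt (i : ℕ) (T : ℕ → ℕ → Finset ℕ) (r j x : ℕ) :
    x ∈ restrictTwo i T r j ↔ x ∈ T r j ∧ (x = i ∨ x = i + 1) := by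
  simp [restrictTwo]

theorem rt_col (i : ℕ) (T : ℕ → ℕ → Finset ℕ) (j : ℕ) :
    (ColHas (restrictTwo i T) j i ↔ ColHas T j i) ∧
    (ColHas (restrictTwo i T) j (i+1) ↔ ColHas T j (i+1)) := by
  simp [ColHas, mem_rt]

theorem e_exists {lam : ℕ → ℕ} (hlam : IsPartitionFun lam) {T : ℕ → ℕ → Finset ℕ}
    (hT : IsSVRPP lam (fun _ => 0) T) (i A : ℕ) (hA : LeftmostUnpairedMinus i T A) :
    ∃ T', ERel i T T' := by
  obtain ⟨N, hN⟩ := hlam.2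
  have hR : BReg (fun r j => i ∈ T r j ∨ i + 1 ∈ T r j) (lam 0) N := by
    refine ⟨?_, ?_, ?_⟩
    · intro r j r' j' s k h h' hs hs' hk hk'
      have b1 : j' < lam r' := h'.elim (aux_mem_s17 hT) (aux_mem_s17 hT)
      have b2 := aux_anti hlam hs'
      obtain ⟨z, hz⟩ := aux_ne hT (r := s) (j := k) (by omega)
      by_cases c1 : r = s ∧ j = k
      · rw [← c1.1, ← c1.2]; exact h
      by_cases c2 : s = r' ∧ k = j'
      · rw [c2.1, c2.2]; exact h'
      have l1 : i ≤ z := by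
        rcases h with h | h
        · exact aux_le hlam hT h hz hs hk (by omega)
        · have := aux_le hlam hT h hz hs hk (by omega)
          omega
      have l2 : z ≤ i + 1 := by
        rcases h' with h | h
        · have := aux_le hlam hT hz h hs' hk' (by omega)
          omega
        · exact aux_le hlam hT hz h hs' hk' (by omega)
      have : z = i ∨ z = i + 1 := by omega
      rcases this with rfl | rfl
      · exact .inl hz
      · exact .inr hz
    · intro r j h
      have b1 : j < lam r := h.elim (aux_mem_s17 hT) (aux_mem_s17 hT)
      exact b1.trans_le (aux_anti hlam (Nat.zero_le _))
    · intro r j h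
      have b1 : j < lam r := h.elim (aux_mem_s17 hT) (aux_mem_s17 hT)
      by_contra hc
      have := hN r (by omega)
      omega
  have hcol := rt_col i T A
  obtain ⟨⟨hB1, hB2⟩, -⟩ := id hA
  rw [hcol.1] at hB2
  rw [hcol.2] at hB1
  have q0 : ∀ r j, i ∈ raiseCol i A (restrictTwo i T) r j ↔
      (j = A ∧ i + 1 ∈ T r j) ∨ (j ≠ A ∧ i ∈ T r j) := by
    intro r j
    have hn : i ∉ T r A := fun h => hB2 ⟨r, h⟩
    by_cases hj : j = A
    · subst hj
      simp only [raiseCol, if_true, Finset.mem_image, mem_rt]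
      constructor
      · rintro ⟨x, ⟨hx, rfl | rfl⟩, -⟩
        · exact absurd hx hn
        · simp [hx]
      · intro h
        exact ⟨i+1, by simpa using h, by simp⟩
    · simp [raiseCol, hj, mem_rt]
  have q1 : ∀ r j, i + 1 ∈ raiseCol i A (restrictTwo i T) r j ↔ (j ≠ A ∧ i + 1 ∈ T r j) := by
    intro r j
    by_cases hj : j = A
    · subst hj
      simp only [raiseCol, if_true, Finset.mem_image, mem_rt]
      constructor
      · rintro ⟨x, ⟨hx, rfl | rfl⟩, h⟩ <;> simp at h
      · intro h; exact absurd rfl h.1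
    · simp [raiseCol, hj, mem_rt]
  have q2 : ∀ r j x, x ∈ raiseCol i A (restrictTwo i T) r j → x = i ∨ x = i + 1 := by
    intro r j x hx
    by_cases hj : j = A
    · subst hj
      simp only [raiseCol, if_true, Finset.mem_image, mem_rt] at hx
      obtain ⟨y, ⟨-, rfl | rfl⟩, rfl⟩ := hx <;> simp
    · simp only [raiseCol, if_neg hj, mem_rt] at hx
      exact hx.2
  have hI : BInv i (fun r j => i ∈ T r j ∨ i + 1 ∈ T r j) (raiseCol i A (restrictTwo i T)) := by
    refine ⟨?_, ?_, ?_, ?_⟩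
    · intro r j h
      rw [q0, q1]
      have : j = A → i ∉ T r j := by rintro rfl h; exact hB2 ⟨r, h⟩
      tauto
    · intro r j x hx
      refine ⟨?_, q2 _ _ _ hx⟩
      rcases q2 _ _ _ hx with rfl | rfl
      · rw [q0] at hx; tauto
      · rw [q1] at hx; tauto
    · intro r r' j h h'
      rw [q1] at h
      rw [q0] at h'
      have h' : i ∈ T r' j := by tauto
      by_contra hc
      have := aux_le hlam hT h.2 h' (by omega) le_rfl (by omega)
      omega
    · intro j j' hjj hm hm' r r' h h'
      rw [q1] at h
      rw [q0] at h'
      have n : j' ≠ A := by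
        obtain ⟨-, r, hr⟩ := hm'
        rw [q1] at hr; exact hr.1
      have h' : i ∈ T r' j' := by tauto
      by_contra hc
      have := aux_le hlam hT h.2 h' (by omega) hjj.le (by omega)
      omega
  obtain ⟨S', h1, h2⟩ := resolve hR _ _ le_rfl hI
  exact ⟨_, A, S', hA, h1, h2, rfl⟩

/-- suffix column counts -/
noncomputable def cnt (T : ℕ → ℕ → Finset ℕ) (v p : ℕ) : ℕ :=
  Set.ncard {j : ℕ | p ≤ j ∧ ColHas T j v}

theorem fin_of {lam : ℕ → ℕ} (hlam : IsPartitionFun lam) {T : ℕ → ℕ → Finset ℕ}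
    (hT : IsSVRPP lam (fun _ => 0) T) (X : Set ℕ) (hX : ∀ j ∈ X, ∃ v, ColHas T j v) :
    X.Finite := by
  apply (Set.finite_Iio (lam 0)).subset
  intro j hj
  obtain ⟨v, r, hr⟩ := hX j hj
  exact (aux_mem_s17 hT hr).trans_le (aux_anti hlam (Nat.zero_le _))

theorem fsuffix_eq {lam : ℕ → ℕ} (hlam : IsPartitionFun lam) {T : ℕ → ℕ → Finset ℕ}
    (hT : IsSVRPP lam (fun _ => 0) T) (i p : ℕ) :
    fsuffix i T p = (cnt T (i+1) p : ℤ) - cnt T i p := by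
  have key : ∀ x y, cnt T x p = Set.ncard {j : ℕ | p ≤ j ∧ (ColHas T j x ∧ ¬ ColHas T j y)} +
      Set.ncard {j : ℕ | p ≤ j ∧ (ColHas T j x ∧ ColHas T j y)} := by
    intro x y
    unfold cnt
    rw [← Set.ncard_union_eq _ (fin_of hlam hT _ (fun j hj => ⟨x, hj.2.1⟩))
      (fin_of hlam hT _ (fun j hj => ⟨x, hj.2.1⟩))]
    · congr 1; ext j; simp only [Set.mem_ofPred_eq, Set.mem_union]; tauto
    · rw [Set.disjoint_left]; rintro j hj hj'; exact hj.2.2 hj'.2.2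
  have k1 := key i (i+1)
  have k2 := key (i+1) i
  have : {j : ℕ | p ≤ j ∧ (ColHas T j (i+1) ∧ ColHas T j i)} =
    {j : ℕ | p ≤ j ∧ (ColHas T j i ∧ ColHas T j (i+1))} := by ext j; simp only [Set.mem_ofPred_eq]; tauto
  rw [this] at k2
  unfold fsuffix ColPureA ColPureB
  simp only [rt_col]
  omega

theorem cnt_succ {lam : ℕ → ℕ} (hlam : IsPartitionFun lam) {T : ℕ → ℕ → Finset ℕ}
    (hT : IsSVRPP lam (fun _ => 0) T) (v p : ℕ) :
    cnt T v p = cnt T v (p+1) + if ColHas T p v then 1 else 0 := by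
  unfold cnt
  split_ifs with h
  · rw [← Set.ncard_insert_of_notMem _ (fin_of hlam hT _ (fun j hj => ⟨v, hj.2⟩))]
    · congr 1; ext j
      simp only [Set.mem_ofPred_eq, Set.mem_insert_iff]
      constructor
      · rintro ⟨h1, h2⟩
        rcases h1.eq_or_lt with h | h
        · exact .inl h.symm
        · exact .inr ⟨h, h2⟩
      · rintro (rfl | ⟨h1, h2⟩)
        · exact ⟨le_rfl, h⟩
        · exact ⟨by omega, h2⟩
    · simp
  · congr 1; ext j
    simp only [Set.mem_ofPred_eq]
    constructor
    · rintro ⟨h1, h2⟩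
      rcases h1.eq_or_lt with h' | h'
      · subst h'; exact absurd h2 h
      · exact ⟨h', h2⟩
    · rintro ⟨h1, h2⟩
      exact ⟨by omega, h2⟩

theorem cnt_zero {lam : ℕ → ℕ} (hlam : IsPartitionFun lam) {T : ℕ → ℕ → Finset ℕ}
    (hT : IsSVRPP lam (fun _ => 0) T) (v p : ℕ) (hp : lam 0 ≤ p) : cnt T v p = 0 := by
  unfold cnt
  convert Set.ncard_empty ℕ
  ext j
  simp only [Set.mem_ofPred_eq, Set.mem_empty_iff_false, iff_false]
  rintro ⟨h, r, hr⟩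
  have := (aux_mem_s17 hT hr).trans_le (aux_anti hlam (Nat.zero_le _))
  omega

theorem cnt_le {lam : ℕ → ℕ} (hlam : IsPartitionFun lam) {T : ℕ → ℕ → Finset ℕ}
    (hT : IsSVRPP lam (fun _ => 0) T) (i : ℕ) (h : eOp i T = none) (p : ℕ) :
    cnt T (i+1) p ≤ cnt T i p := by
  by_contra hc
  have hf := fsuffix_eq hlam hT i
  have hE : ¬ ∃ T', ERel i T T' := by
    intro hE
    simp [eOp, hE] at h
  apply hE
  have hp : p < lam 0 := by
    by_contra hp
    rw [cnt_zero hlam hT (i+1) p (by omega)] at hc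
    omega
  obtain ⟨A, hA, hmax⟩ := Finset.exists_max_image (Finset.range (lam 0))
    (fun q => fsuffix i T q * ((lam 0 : ℤ) + 1) + q) ⟨p, by simpa⟩
  have hz : ∀ q, lam 0 ≤ q → fsuffix i T q = 0 := by
    intro q hq
    rw [hf, cnt_zero hlam hT _ q hq, cnt_zero hlam hT _ q hq]; simp
  simp only [Finset.mem_range] at hA hmax
  have hle : ∀ q, q < lam 0 → fsuffix i T q ≤ fsuffix i T A := by
    intro q hq
    have h1 := hmax q hq
    by_contra hlt
    have : (lam 0 : ℤ) + 1 ≤ (fsuffix i T q - fsuffix i T A) * ((lam 0 : ℤ) + 1) := by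
      nlinarith
    have : (A : ℤ) < lam 0 := by exact_mod_cast hA
    nlinarith
  have hpos : 0 < fsuffix i T A := by
    have := hle p hp
    have := hf p
    omega
  have hlt : ∀ q, A < q → fsuffix i T q < fsuffix i T A := by
    intro q hq
    by_cases hq' : q < lam 0
    · refine lt_of_le_of_ne (hle q hq') ?_
      intro he
      have h1 := hmax q hq'
      rw [he] at h1
      have : (A : ℤ) < q := by exact_mod_cast hq
      linarith
    · rw [hz q (by omega)]; exact hpos
  refine e_exists hlam hT i A ⟨?_, ?_, hlt⟩
  · have h1 := hlt (A+1) (by omega)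
    rw [hf, hf, cnt_succ hlam hT i A, cnt_succ hlam hT (i+1) A] at h1
    unfold ColPureB
    simp only [rt_col]
    split_ifs at h1 with h2 h3 h3
    · omega
    · exact ⟨h2, h3⟩
    · omega
    · omega
  · intro q
    by_cases hq : q < lam 0
    · exact hle q hq
    · rw [hz q (by omega)]; exact hpos.le

theorem rows_bound {lam : ℕ → ℕ} (hlam : IsPartitionFun lam) {T : ℕ → ℕ → Finset ℕ} {n : ℕ}
    (hT : IsSVRPPn lam (fun _ => 0) n T)
    (hc : ∀ i, 1 ≤ i → ∀ p, cnt T (i+1) p ≤ cnt T i p) :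
    ∀ r v, r + 1 ≤ v → Set.ncard {j : ℕ | ∃ s, s < r ∧ v ∈ T s j} ≤ r := by
  intro r
  have hT1 := hT.1
  induction r with
  | zero => intro v hv; simp
  | succ r ih =>
    intro v hv
    by_cases hrow : ∃ j, v ∈ T r j
    · obtain ⟨j, hj, hmin⟩ : ∃ j, v ∈ T r j ∧ ∀ j' < j, v ∉ T r j' :=
        ⟨Nat.find hrow, Nat.find_spec hrow, fun j' h => Nat.find_min hrow h⟩
      have hsub : {j : ℕ | ∃ s, s < r + 1 ∧ v ∈ T s j} ⊆
          insert j {j' : ℕ | j + 1 ≤ j' ∧ ColHas T j' v} := by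
        rintro j' ⟨s, hs, hv'⟩
        rcases lt_trichotomy j' j with h | h | h
        · exfalso
          have hjr := aux_mem_s17 hT1 hj
          obtain ⟨z, hz⟩ := aux_ne hT1 (r := r) (j := j') (by omega)
          have hsr : s ≠ r := by rintro rfl; exact hmin _ h hv'
          have l1 := aux_le hlam hT1 hv' hz (by omega) le_rfl (by omega)
          have l2 := aux_le hlam hT1 hz hj le_rfl h.le (by omega)
          have : z = v := by omega
          exact hmin _ h (this ▸ hz)
        · exact .inl h
        · exact .inr ⟨h, s, hv'⟩
      have h1 : cnt T v (j+1) ≤ cnt T (v-1) (j+1) := by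
        have := hc (v-1) (by omega) (j+1)
        rwa [Nat.sub_add_cancel (by omega)] at this
      have h2 : cnt T (v-1) (j+1) ≤ Set.ncard {j : ℕ | ∃ s, s < r ∧ v - 1 ∈ T s j} := by
        apply Set.ncard_le_ncard
        · rintro j' ⟨hj', s, hs⟩
          refine ⟨s, ?_, hs⟩
          by_contra hsr
          have := aux_le hlam hT1 hj hs (by omega) (by omega) (by omega)
          omega
        · exact fin_of hlam hT1 _ (fun j ⟨s, _, h⟩ => ⟨_, s, h⟩)
      have h3 := ih (v-1) (by omega)
      have hfin : {j' : ℕ | j + 1 ≤ j' ∧ ColHas T j' v}.Finite :=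
        fin_of hlam hT1 _ (fun j' h => ⟨v, h.2⟩)
      have h4 := Set.ncard_le_ncard hsub (hfin.insert j)
      have h5 := Set.ncard_insert_le j {j' : ℕ | j + 1 ≤ j' ∧ ColHas T j' v}
      unfold cnt at h1 h2
      omega
    · have : {j : ℕ | ∃ s, s < r + 1 ∧ v ∈ T s j} = {j : ℕ | ∃ s, s < r ∧ v ∈ T s j} := by
        ext j
        simp only [Set.mem_ofPred_eq]
        constructor
        · rintro ⟨s, hs, h⟩
          refine ⟨s, ?_, h⟩
          have : s ≠ r := by rintro rfl; exact hrow ⟨j, h⟩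
          omega
        · rintro ⟨s, hs, h⟩
          exact ⟨s, by omega, h⟩
      rw [this]
      have := ih v (by omega)
      omega

theorem ircont_bound {lam : ℕ → ℕ} (hlam : IsPartitionFun lam) {T : ℕ → ℕ → Finset ℕ} {n : ℕ}
    (hT : IsSVRPPn lam (fun _ => 0) n T)
    (hc : ∀ i, 1 ≤ i → ∀ p, cnt T (i+1) p ≤ cnt T i p) (r v : ℕ) (hv : r + 1 ≤ v) :
    ircont T v ≤ lam r + r := by
  have h1 := rows_bound hlam hT hc r v hv
  have h2 : {j : ℕ | ∃ i, v ∈ T i j} ⊆ {j : ℕ | ∃ s, s < r ∧ v ∈ T s j} ∪ Set.Iio (lam r) := by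
    rintro j ⟨s, hs⟩
    by_cases h : s < r
    · exact .inl ⟨s, h, hs⟩
    · exact .inr ((aux_mem_s17 hT.1 hs).trans_le (aux_anti hlam (by omega)))
  have h3 := Set.ncard_le_ncard h2
    ((fin_of hlam hT.1 {j : ℕ | ∃ s, s < r ∧ v ∈ T s j}
      (fun j ⟨s, _, h⟩ => ⟨_, s, h⟩)).union (Set.finite_Iio _))
  have h4 := Set.ncard_union_le {j : ℕ | ∃ s, s < r ∧ v ∈ T s j} (Set.Iio (lam r))
  have h5 : (Set.Iio (lam r)).ncard = lam r := by
    rw [Set.ncard_eq_toFinset_card']; simp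
  unfold ircont
  omega

theorem flat_attain (lam : ℕ → ℕ) : ∀ r, ∃ s ≤ r, lam s + s ≤ flatPart lam r + r := by
  intro r
  induction r with
  | zero => exact ⟨0, le_rfl, by simp [flatPart]⟩
  | succ r ih =>
    obtain ⟨s, hs, h⟩ := ih
    simp only [flatPart]
    rcases le_total (flatPart lam r - 1) (lam (r+1)) with h' | h'
    · rw [min_eq_left h']
      exact ⟨s, by omega, by omega⟩
    · rw [min_eq_right h']
      exact ⟨r+1, le_rfl, le_rfl⟩

theorem flat_kFlat (lam : ℕ → ℕ) (hlam : IsPartitionFun lam) : flatPart lam (kFlat lam) = 0 := by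
  have anti : Antitone (flatPart lam) := by
    apply antitone_nat_of_succ_le
    intro r
    simp only [flatPart]
    omega
  have hex : ∃ m, flatPart lam m = 0 := by
    obtain ⟨N, hN⟩ := hlam.2
    refine ⟨N + 1, ?_⟩
    simp [flatPart, hN (N+1) (by omega)]
  have : {i : ℕ | 0 < flatPart lam i} = Set.Iio (Nat.find hex) := by
    ext i
    simp only [Set.mem_ofPred_eq, Set.mem_Iio]
    constructor
    · intro h
      by_contra hc
      have h1 := anti (not_lt.1 hc)
      have := Nat.find_spec hex
      omega
    · intro h
      have := Nat.find_min hex h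
      omega
  have hk : kFlat lam = Nat.find hex := by
    unfold kFlat
    rw [this, Set.ncard_eq_toFinset_card']; simp
  rw [hk]; exact Nat.find_spec hex

end aux

/-- For any partition `lam` and any `n ≥ 1`, if `T ∈ SVRPP^n(lam)` is a
highest weight element with `wt(T) = ρ`, then `ρ` is a partition with
`(λ_1) ⊆ ρ ⊆ λ̄^{(n)}`: `ρ_1 = λ_1`, `ρ` is weakly decreasing, and `ρ_v ≤ λ̄^{(n)}_v`
for all `v`. (Here `ρ v = ircont T v`, 1-indexed.) -/
theorem highest_weight_wt_between (lam : ℕ → ℕ) (hlam : IsPartitionFun lam)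
    (n : ℕ) (hn : 1 ≤ n) (T : ℕ → ℕ → Finset ℕ)
    (hT : IsSVRPPn lam (fun _ => 0) n T)
    (hhw : ∀ i, 1 ≤ i → i < n → eOp i T = none) :
    ircont T 1 = lam 0 ∧
    (∀ v, 1 ≤ v → ircont T (v + 1) ≤ ircont T v) ∧
    (∀ v, ircont T v ≤ barLam lam n v) := by
  have hT1 := hT.1
  have hc0 : ∀ v p, (v < 1 ∨ n < v) → cnt T v p = 0 := by
    intro v p hv
    unfold cnt
    convert Set.ncard_empty ℕ
    ext j
    simp only [Set.mem_ofPred_eq, Set.mem_empty_iff_false, iff_false]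
    rintro ⟨h, r, hr⟩
    have := hT.2 r j hr
    rw [Finset.mem_Icc] at this
    omega
  have hc : ∀ i, 1 ≤ i → ∀ p, cnt T (i+1) p ≤ cnt T i p := by
    intro i hi p
    by_cases h : i < n
    · exact cnt_le hlam hT1 i (hhw i hi h) p
    · rw [hc0 (i+1) p (by omega)]; omega
  have hir : ∀ v, ircont T v = cnt T v 0 := by
    intro v; simp [ircont, cnt, ColHas]
  refine ⟨?_, ?_, ?_⟩
  · have hset : {j : ℕ | ∃ i, 1 ∈ T i j} = Set.Iio (lam 0) := by
      ext j
      simp only [Set.mem_ofPred_eq, Set.mem_Iio]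
      constructor
      · rintro ⟨r, hr⟩
        exact (aux_mem_s17 hT1 hr).trans_le (aux_anti hlam (Nat.zero_le _))
      · intro hj
        obtain ⟨z, hz⟩ := aux_ne hT1 (r := 0) (j := lam 0 - 1) (by omega)
        have hz1 := hT1.2.2.1 _ _ _ hz
        have hmono : ∀ v, 1 ≤ v → cnt T v (lam 0 - 1) ≤ cnt T 1 (lam 0 - 1) := by
          intro v hv
          induction v, hv using Nat.le_induction with
          | base => exact le_rfl
          | succ v hv ih => exact (hc v hv _).trans ih
        have h1 := hmono z hz1
        rw [cnt_succ hlam hT1 z, cnt_succ hlam hT1 1, Nat.sub_add_cancel (by omega),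
          cnt_zero hlam hT1 _ _ le_rfl, cnt_zero hlam hT1 _ _ le_rfl,
          if_pos ⟨0, hz⟩] at h1
        have h2 : ColHas T (lam 0 - 1) 1 := by
          by_contra h; rw [if_neg h] at h1; omega
        obtain ⟨r, hr⟩ := h2
        by_cases he : j = lam 0 - 1
        · exact ⟨r, he ▸ hr⟩
        · obtain ⟨y, hy⟩ := aux_ne hT1 (r := 0) (j := j) hj
          have := aux_le hlam hT1 hy hr (Nat.zero_le _) (by omega) (by omega)
          have := hT1.2.2.1 _ _ _ hy
          have : y = 1 := by omega
          exact ⟨0, this ▸ hy⟩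
    unfold ircont
    rw [hset, Set.ncard_eq_toFinset_card']; simp
  · intro v hv
    rw [hir, hir]; exact hc v hv 0
  · intro v
    unfold barLam
    split_ifs with h1 h2
    · obtain ⟨s, hs, h⟩ := flat_attain lam (v-1)
      exact (ircont_bound hlam hT hc s v (by omega)).trans h
    · obtain ⟨s, hs, h⟩ := flat_attain lam (kFlat lam)
      rw [flat_kFlat lam hlam] at h
      have := ircont_bound hlam hT hc s v (by omega)
      omega
    · rw [hir, hc0 v 0 (by omega)]
end

section
/- For every fixed partition μ, the operators ũ_i = u_i(1 + d_{μ,i}) (i ≥ 1) on the free Z[α,β]-module with basis the partitions containing μ satisfy the Fomin–Greene relations: (i) ũ_i ũ_k ũ_j = ũ_k ũ_i ũ_j for all i < j < k; (ii) ũ_j ũ_k ũ_i = ũ_j ũ_i ũ_k for all i < j < k; (iii) ũ_j (ũ_i ũ_j − ũ_j ũ_i) = (ũ_i ũ_j − ũ_j ũ_i) ũ_i for all i < j. -/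
open scoped Classical

/-- The coefficient ring `ℤ[α, β]`, with `α = X 0` and `β = X 1`. -/
abbrev RAB : Type := MvPolynomial (Fin 2) ℤ

/-- Partitions containing `mu` (componentwise). -/
def PartAbove (mu : ℕ → ℕ) : Type :=
  {l : ℕ → ℕ // IsPartitionFun l ∧ ∀ i, mu i ≤ l i}

/-- The module of formal `ℤ[α,β]`-linear combinations of partitions containing `mu`
(a partition `l` is identified with the delta function at `l`). -/
def ModAbove (mu : ℕ → ℕ) : Type := PartAbove mu → RAB

/-- The height of column `c` (0-indexed) of the partition `l`. -/
noncomputable def colHeight (l : ℕ → ℕ) (c : ℕ) : ℕ :=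
  Set.ncard {r : ℕ | c < l r}

/-- `AddCol c a l nu`: the partition `nu` is obtained from `l` by adding `a ≥ 1` boxes to
the bottom of the `c`-th column (the rows receiving a new box must currently have exactly
`c` boxes, so that the result is a valid partition). -/
def AddCol (c a : ℕ) (l nu : ℕ → ℕ) : Prop :=
  1 ≤ a ∧
  (∀ r, colHeight l c ≤ r → r < colHeight l c + a → l r = c) ∧
  nu = fun r => if colHeight l c ≤ r ∧ r < colHeight l c + a then c + 1 else l r

/-- The column-adding operator `u_c`: on a basis partition `l`,
`u_c · l = Σ_{a ≥ 1} α^{a−1} (l ∪ {a boxes in column c})`, the sum being over all valid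
`a` (and `0` if there are none). Written out on formal sums: the coefficient of `nu` in
`u_c f` is `Σ_{a, l : AddCol c a l nu} α^{a−1} · (f l)`. -/
noncomputable def uOp {mu : ℕ → ℕ} (c : ℕ) (f : ModAbove mu) : ModAbove mu :=
  fun nu => ∑ᶠ a : ℕ, ∑ᶠ l : PartAbove mu,
    if AddCol c a l.1 nu.1 then (MvPolynomial.X 0 : RAB) ^ (a - 1) * f l else 0

/-- The Schur operator `d_{mu,c}`: on a basis partition `l`, `d_{mu,c} · l = β · nu` if
removing the bottom box of the `c`-th column of `l` yields a valid partition `nu`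
containing `mu`, and `0` otherwise. (Removing a box from `l` giving `nu` is the same as
adding one box to `nu` giving `l`.) -/
noncomputable def dOp {mu : ℕ → ℕ} (c : ℕ) (f : ModAbove mu) : ModAbove mu :=
  fun nu => ∑ᶠ l : PartAbove mu,
    if AddCol c 1 nu.1 l.1 then (MvPolynomial.X 1 : RAB) * f l else 0

/-- The operator `ũ_c = u_c (1 + d_{mu,c})`. -/
noncomputable def tuOp {mu : ℕ → ℕ} (c : ℕ) (f : ModAbove mu) : ModAbove mu :=
  uOp c (fun nu => f nu + dOp c f nu)

namespace FG

theorem anti {l : ℕ → ℕ} (hl : IsPartitionFun l) {a b : ℕ} (h : a ≤ b) : l b ≤ l a :=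
  antitone_nat_of_succ_le hl.1 h

theorem lt_col {l : ℕ → ℕ} (hl : IsPartitionFun l) (r c : ℕ) :
    r < colHeight l c ↔ c < l r := by
  have hex : ∃ n, l n ≤ c := by
    obtain ⟨N, hN⟩ := hl.2
    exact ⟨N, by simp [hN N le_rfl]⟩
  have hset : {r : ℕ | c < l r} = ↑(Finset.range (Nat.find hex)) := by
    ext s
    simp only [Set.mem_ofPred_eq, Finset.coe_range, Set.mem_Iio]
    constructor
    · intro h
      by_contra hc
      have h1 := anti hl (not_lt.mp hc)
      have h2 := Nat.find_spec hex
      omega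
    · intro h
      have := Nat.find_min hex h
      omega
  have hc : colHeight l c = Nat.find hex := by
    unfold colHeight
    rw [hset, Set.ncard_coe_finset, Finset.card_range]
  have : r ∈ {r : ℕ | c < l r} ↔ r ∈ (↑(Finset.range (Nat.find hex)) : Set ℕ) := by rw [hset]
  simp only [Set.mem_ofPred_eq, Finset.coe_range, Set.mem_Iio] at this
  rw [hc, this]

theorem col_part {l : ℕ → ℕ} (hl : IsPartitionFun l) : IsPartitionFun (colHeight l) := by
  constructor
  · intro c
    by_contra h
    push Not at h
    have h1 := (lt_col hl _ _).1 h
    have h2 : ¬ (colHeight l c < colHeight l c) := lt_irrefl _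
    rw [lt_col hl] at h2
    omega
  · refine ⟨l 0, fun c hc => ?_⟩
    by_contra h
    have := (lt_col hl 0 c).1 (by omega)
    omega

theorem col_col {l : ℕ → ℕ} (hl : IsPartitionFun l) : colHeight (colHeight l) = l := by
  funext r
  apply eq_of_forall_lt_iff
  intro c
  rw [lt_col (col_part hl), lt_col hl]

theorem addCol_iff {l nu : ℕ → ℕ} (hl : IsPartitionFun l) (hn : IsPartitionFun nu) (c a : ℕ) :
    AddCol c a l nu ↔ 1 ≤ a ∧
      colHeight nu = Function.update (colHeight l) c (colHeight l c + a) := by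
  unfold AddCol
  refine and_congr_right fun ha => ?_
  constructor
  · rintro ⟨h1, h2⟩
    funext c'
    apply eq_of_forall_lt_iff
    intro r
    rw [lt_col hn, h2, Function.update_apply]
    have e1 := lt_col hl r c
    have e2 := lt_col hl r c'
    have := h1 r
    dsimp only
    split_ifs with h3 h4 h4
    · subst h4; omega
    · have := this h3.1 h3.2
      omega
    · subst h4; omega
    · omega
  · intro h
    have key : ∀ r c', c' < nu r ↔
        r < Function.update (colHeight l) c (colHeight l c + a) c' := by
      intro r c'; rw [← h, lt_col hn]
    have kc : ∀ r, c < nu r ↔ r < colHeight l c + a := by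
      intro r; rw [key]; simp
    have kn : ∀ r c', c' ≠ c → (c' < nu r ↔ c' < l r) := by
      intro r c' hc; rw [key, Function.update_of_ne hc, lt_col hl]
    have inr : ∀ r, colHeight l c ≤ r → r < colHeight l c + a → l r = c := by
      intro r h1 h2
      have e1 := lt_col hl r c
      have e2 := kc r
      rcases Nat.eq_zero_or_pos c with hc | hc
      · omega
      · have := kn r (c-1) (by omega)
        omega
    refine ⟨inr, ?_⟩
    funext r
    have i1 := inr r
    have e1 := lt_col hl r c
    split_ifs with h3
    · have := i1 h3.1 h3.2
      have := kc r
      have := kn r (c+1) (by omega)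
      omega
    · apply eq_of_forall_lt_iff
      intro c'
      by_cases hc : c' = c
      · subst hc
        rw [kc]; omega
      · exact kn r c' hc

def Valid (mu h : ℕ → ℕ) : Prop := IsPartitionFun h ∧ ∀ c, colHeight mu c ≤ h c

theorem le_iff {mu l : ℕ → ℕ} (hm : IsPartitionFun mu) (hl : IsPartitionFun l) 
    (h : ∀ i, mu i ≤ l i) (c : ℕ) : colHeight mu c ≤ colHeight l c := by
  by_contra hc
  push Not at hc
  have h1 := (lt_col hm _ _).1 hc
  have h2 : ¬ (colHeight l c < colHeight l c) := lt_irrefl _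
  rw [lt_col hl] at h2
  have := h (colHeight l c)
  omega

theorem valid_col {mu : ℕ → ℕ} (hm : IsPartitionFun mu) (l : PartAbove mu) :
    Valid mu (colHeight l.1) :=
  ⟨col_part l.2.1, le_iff hm l.2.1 l.2.2⟩

noncomputable def mk {mu : ℕ → ℕ} (hm : IsPartitionFun mu) (h : ℕ → ℕ) (hv : Valid mu h) : PartAbove mu :=
  ⟨colHeight h, col_part hv.1, fun i => by
    have := le_iff (col_part hm) hv.1 hv.2 i
    rwa [col_col hm] at this⟩

theorem col_mk {mu : ℕ → ℕ} (hm : IsPartitionFun mu) (h : ℕ → ℕ) (hv : Valid mu h) :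
    colHeight (mk hm h hv).1 = h := col_col hv.1

theorem col_inj {mu : ℕ → ℕ} {l l' : PartAbove mu} (h : colHeight l.1 = colHeight l'.1) :
    l = l' := by
  apply Subtype.ext
  rw [← col_col l.2.1, ← col_col l'.2.1, h]

noncomputable def ext {mu : ℕ → ℕ} (hm : IsPartitionFun mu) (f : ModAbove mu) (h : ℕ → ℕ) : RAB :=
  if hv : Valid mu h then f (mk hm h hv) else 0

theorem ext_col {mu : ℕ → ℕ} (hm : IsPartitionFun mu) (f : ModAbove mu) (l : PartAbove mu) :
    ext hm f (colHeight l.1) = f l := by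
  unfold ext
  rw [dif_pos (valid_col hm l)]
  congr 1
  exact col_inj (col_mk hm _ _)

/-- sum over a unique partition with given column heights -/
theorem finsum_col {mu : ℕ → ℕ} (hm : IsPartitionFun mu) (f : ModAbove mu) (k : RAB)
    (h : ℕ → ℕ) :
    (∑ᶠ l : PartAbove mu, if colHeight l.1 = h then k * f l else 0) = k * ext hm f h := by
  by_cases hv : Valid mu h
  · rw [finsum_eq_single _ (mk hm h hv)]
    · rw [if_pos (col_mk hm h hv)]
      simp [ext, hv]
    · intro l hl
      rw [if_neg]
      intro hc
      exact hl (col_inj (hc.trans (col_mk hm h hv).symm))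
  · have : ∀ l : PartAbove mu, colHeight l.1 ≠ h := fun l hl => hv (hl ▸ valid_col hm l)
    simp [this, ext, hv]

theorem dOp_eq {mu : ℕ → ℕ} (hm : IsPartitionFun mu) (c : ℕ) (f : ModAbove mu)
    (nu : PartAbove mu) :
    dOp c f nu = MvPolynomial.X 1 *
      ext hm f (Function.update (colHeight nu.1) c (colHeight nu.1 c + 1)) := by
  unfold dOp
  rw [← finsum_col hm f]
  congr 1
  funext l
  rw [addCol_iff nu.2.1 l.2.1]
  simp

theorem valid_update {mu h : ℕ → ℕ} (hv : Valid mu h) (c b : ℕ) (hb : b ≤ h c) :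
    Valid mu (Function.update h c b) ↔ max (h (c+1)) (colHeight mu c) ≤ b := by
  constructor
  · rintro ⟨h1, h2⟩
    have a1 := h1.1 c
    have a2 := h2 c
    rw [Function.update_of_ne (by omega), Function.update_self] at a1
    rw [Function.update_self] at a2
    exact max_le a1 a2
  · intro h'
    have h1 := (max_le_iff.1 h').1
    have h2 := (max_le_iff.1 h').2
    refine ⟨⟨fun i => ?_, ?_⟩, fun i => ?_⟩
    · have := hv.1.1 i
      simp only [Function.update_apply]
      split_ifs with e1 e2 e2
      · omega
      · subst e1; omega
      · subst e2; omega
      · exact this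
    · obtain ⟨N, hN⟩ := hv.1.2
      refine ⟨N, fun i hi => ?_⟩
      have := hN i hi
      simp only [Function.update_apply]
      split_ifs with e1
      · subst e1; omega
      · exact this
    · have := hv.2 i
      simp only [Function.update_apply]
      split_ifs with e1
      · subst e1; omega
      · exact this

theorem uOp_eq {mu : ℕ → ℕ} (hm : IsPartitionFun mu) (c : ℕ) (f : ModAbove mu)
    (nu : PartAbove mu) :
    uOp c f nu = ∑ b ∈ Finset.Ico (max (colHeight nu.1 (c+1)) (colHeight mu c)) (colHeight nu.1 c),
      MvPolynomial.X 0 ^ (colHeight nu.1 c - b - 1) *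
        ext hm f (Function.update (colHeight nu.1) c b) := by
  unfold uOp
  set h := colHeight nu.1 with hh
  have hv : Valid mu h := valid_col hm nu
  set E := max (h (c+1)) (colHeight mu c) with hE
  have inner : ∀ a : ℕ, (∑ᶠ l : PartAbove mu,
      if AddCol c a l.1 nu.1 then (MvPolynomial.X 0 : RAB) ^ (a - 1) * f l else 0) =
      if 1 ≤ a ∧ a ≤ h c then MvPolynomial.X 0 ^ (a - 1) *
        ext hm f (Function.update h c (h c - a)) else 0 := by
    intro a
    split_ifs with ha
    · rw [← finsum_col hm f]
      congr 1
      funext l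
      congr 1
      rw [addCol_iff l.2.1 nu.2.1, ← hh]
      apply propext
      constructor
      · rintro ⟨_, e⟩
        rw [e]; simp
      · intro e
        refine ⟨ha.1, ?_⟩
        rw [e]; simp [Nat.sub_add_cancel ha.2]
    · have : ∀ l : PartAbove mu, ¬ AddCol c a l.1 nu.1 := by
        intro l hl
        rw [addCol_iff l.2.1 nu.2.1, ← hh] at hl
        have := congrFun hl.2 c
        rw [Function.update_self] at this
        omega
      simp [this]
  simp_rw [inner]
  rw [finsum_eq_sum_of_support_subset (s := Finset.Icc 1 (h c))]
  · rw [← Finset.sum_subset (s₁ := Finset.Icc 1 (h c - E))]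
    · refine Finset.sum_nbij' (fun a => h c - a) (fun b => h c - b) ?_ ?_ ?_ ?_ ?_
      · intro a ha; simp only [Finset.mem_Icc, Finset.mem_Ico] at *; omega
      · intro a ha; simp only [Finset.mem_Icc, Finset.mem_Ico] at *; omega
      · intro a ha; simp only [Finset.mem_Icc, Finset.mem_Ico] at *; omega
      · intro a ha; simp only [Finset.mem_Icc, Finset.mem_Ico] at *; omega
      · intro a ha
        simp only [Finset.mem_Icc] at ha
        rw [if_pos (by omega)]
        have : h c - (h c - a) = a := by omega
        rw [this]
    · intro a; simp only [Finset.mem_Icc]; omega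
    · intro a h1 h2
      simp only [Finset.mem_Icc] at h1 h2
      rw [if_pos h1]
      have : ¬ Valid mu (Function.update h c (h c - a)) := by
        rw [valid_update hv _ _ (by omega)]; omega
      simp [ext, this]
  · intro a ha
    simp only [Function.mem_support, ne_eq, ite_eq_right_iff, not_forall] at ha
    obtain ⟨h1, _⟩ := ha
    simpa using h1

/-- one-variable operator -/
noncomputable def S (E : ℕ) (g : ℕ → RAB) (x : ℕ) : RAB :=
  ∑ b ∈ Finset.Ico E x, MvPolynomial.X 0 ^ (x - b - 1) * (g b + MvPolynomial.X 1 * g (b+1))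

noncomputable def T (mu : ℕ → ℕ) (c : ℕ) (F : (ℕ → ℕ) → RAB) (h : ℕ → ℕ) : RAB :=
  S (max (h (c+1)) (colHeight mu c)) (fun b => F (Function.update h c b)) (h c)

theorem T_congr {mu : ℕ → ℕ} (c : ℕ) {F G : (ℕ → ℕ) → RAB} 
    (hFG : ∀ h, Valid mu h → F h = G h) (h : ℕ → ℕ) (hv : Valid mu h) : 
    T mu c F h = T mu c G h := by
  unfold T S
  refine Finset.sum_congr rfl fun b hb => ?_
  simp only [Finset.mem_Ico] at hb
  dsimp only
  rw [hFG _ ((valid_update hv c b (by omega)).2 hb.1),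
    hFG _ ((valid_update hv c (b+1) (by omega)).2 (by omega))]

theorem ext_tu {mu : ℕ → ℕ} (hm : IsPartitionFun mu) (c : ℕ) (f : ModAbove mu) (h : ℕ → ℕ)
    (hv : Valid mu h) : ext hm (tuOp c f) h = T mu c (ext hm f) h := by
  have pos : ∀ (g : ModAbove mu) (h' : ℕ → ℕ) (hv' : Valid mu h'),
      ext hm g h' = g (mk hm h' hv') := fun g h' hv' => dif_pos hv'
  refine (pos _ h hv).trans ((uOp_eq hm c _ _).trans ?_)
  rw [col_mk]
  unfold T S
  refine Finset.sum_congr rfl fun b hb => ?_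
  simp only [Finset.mem_Ico] at hb
  have hb' := (valid_update hv c b (by omega)).2 hb.1
  refine congrArg _ ((pos _ _ hb').trans ?_)
  refine congrArg₂ _ (pos f _ hb').symm ((dOp_eq hm c f _).trans ?_)
  rw [col_mk]
  simp

theorem ext_tu3 {mu : ℕ → ℕ} (hm : IsPartitionFun mu) (i j k : ℕ) (f : ModAbove mu)
    (nu : PartAbove mu) : tuOp i (tuOp j (tuOp k f)) nu = 
      T mu i (T mu j (T mu k (ext hm f))) (colHeight nu.1) := by
  refine (ext_col hm (tuOp i (tuOp j (tuOp k f))) nu).symm.trans ?_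
  rw [ext_tu hm _ _ _ (valid_col hm nu)]
  refine T_congr _ (fun h hv => ?_) _ (valid_col hm nu)
  rw [ext_tu hm _ _ _ hv]
  exact T_congr _ (fun h hv => ext_tu hm _ _ _ hv) _ hv

theorem S_comm (E E' : ℕ) (G : ℕ → ℕ → RAB) (x y : ℕ) :
    S E (fun a => S E' (fun b => G a b) y) x = S E' (fun b => S E (fun a => G a b) x) y := by
  unfold S
  simp only [Finset.mul_sum, ← Finset.sum_add_distrib]
  rw [Finset.sum_comm]
  refine Finset.sum_congr rfl fun b _ => Finset.sum_congr rfl fun a _ => ?_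
  ring

theorem T_comm (mu : ℕ → ℕ) (i k : ℕ) (hik : i + 2 ≤ k) (F : (ℕ → ℕ) → RAB) :
    T mu i (T mu k F) = T mu k (T mu i F) := by
  funext h
  unfold T
  have h1 : k ≠ i := by omega
  have h2 : k + 1 ≠ i := by omega
  have h3 : i + 1 ≠ k := by omega
  simp only [Function.update_of_ne h1, Function.update_of_ne h2, Function.update_of_ne h3,
    Function.update_of_ne h1.symm]
  rw [S_comm]
  simp only [Function.update_comm h1]

theorem S_zero {E x : ℕ} (g : ℕ → RAB) (h : x ≤ E) : S E g x = 0 := by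
  unfold S; rw [Finset.Ico_eq_empty (by omega)]; simp

theorem S_succ {E x : ℕ} (g : ℕ → RAB) (h : E ≤ x) :
    S E g (x+1) = MvPolynomial.X 0 * S E g x + g x + MvPolynomial.X 1 * g (x+1) := by
  unfold S
  rw [Finset.sum_Ico_succ_top h, Finset.mul_sum, add_assoc]
  congr 1
  · refine Finset.sum_congr rfl fun b hb => ?_
    simp only [Finset.mem_Ico] at hb
    have : x + 1 - b - 1 = (x - b - 1) + 1 := by omega
    rw [this, pow_succ]; ring
  · simp

theorem S_congr {E x : ℕ} {g g' : ℕ → RAB} (h : ∀ b, E ≤ b → b ≤ x → g b = g' b) :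
    S E g x = S E g' x := by
  unfold S
  refine Finset.sum_congr rfl fun b hb => ?_
  simp only [Finset.mem_Ico] at hb
  rw [h b (by omega) (by omega), h (b+1) (by omega) (by omega)]

theorem S_lin (E x : ℕ) (p q r : RAB) (g1 g2 g3 : ℕ → RAB) :
    S E (fun b => p * g1 b + q * g2 b + r * g3 b) x =
      p * S E g1 x + q * S E g2 x + r * S E g3 x := by
  unfold S
  simp only [Finset.mul_sum, ← Finset.sum_add_distrib]
  refine Finset.sum_congr rfl fun b _ => ?_
  ring

theorem S_sub (E x : ℕ) (g1 g2 : ℕ → RAB) :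
    S E (fun b => g1 b - g2 b) x = S E g1 x - S E g2 x := by
  unfold S
  simp only [← Finset.sum_sub_distrib]
  refine Finset.sum_congr rfl fun b _ => ?_
  ring

noncomputable def U (m : ℕ) (G : ℕ → ℕ → RAB) (x y : ℕ) : RAB := S (max y m) (fun a => G a y) x
noncomputable def V (E : ℕ) (G : ℕ → ℕ → RAB) (x y : ℕ) : RAB := S E (fun b => G x b) y

section two
variable (m E : ℕ)

theorem U_succ (G : ℕ → ℕ → RAB) {x y : ℕ} (h : y ≤ x) (h' : m ≤ x) : U m G (x+1) y =
    MvPolynomial.X 0 * U m G x y + G x y + MvPolynomial.X 1 * G (x+1) y :=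
  S_succ (fun a => G a y) (max_le h h')

theorem U_zero (G : ℕ → ℕ → RAB) {x y : ℕ} (h : x ≤ max y m) : U m G x y = 0 :=
  S_zero _ h

theorem V_succ (G : ℕ → ℕ → RAB) {x y : ℕ} (h : E ≤ y) : V E G x (y+1) =
    MvPolynomial.X 0 * V E G x y + G x y + MvPolynomial.X 1 * G x (y+1) :=
  S_succ _ h

theorem V_zero (G : ℕ → ℕ → RAB) {x y : ℕ} (h : y ≤ E) : V E G x y = 0 :=
  S_zero _ h

theorem VU_succ (G : ℕ → ℕ → RAB) {x y : ℕ} (h : y ≤ x) (h' : m ≤ x) : V E (U m G) (x+1) y =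
    MvPolynomial.X 0 * V E (U m G) x y + V E G x y + MvPolynomial.X 1 * V E G (x+1) y := by
  have := S_lin E y (MvPolynomial.X 0) 1 (MvPolynomial.X 1) (fun b => U m G x b)
    (fun b => G x b) (fun b => G (x+1) b)
  rw [one_mul] at this
  unfold V
  rw [← this]
  refine S_congr fun b _ hb => ?_
  rw [U_succ m G (by omega) h']
  ring

theorem VU_zero (G : ℕ → ℕ → RAB) {x y : ℕ} (h : x ≤ m) : V E (U m G) x y = 0 := by
  unfold V S
  refine Finset.sum_eq_zero fun b hb => ?_
  dsimp only
  rw [U_zero _ _ (by omega), U_zero _ _ (by omega)]; simp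

/-- commutator, in range y ≥ m -/
theorem comm_ge (G : ℕ → ℕ → RAB) {y : ℕ} (hy : m ≤ y) (d : ℕ) :
    U m (V E G) (y+d) y - V E (U m G) (y+d) y =
      - (MvPolynomial.X 0 ^ d * V E (U m G) y y) := by
  induction d with
  | zero => rw [U_zero _ _ (by simp)]; simp
  | succ d ih =>
    rw [← add_assoc, U_succ m _ (by omega) (by omega), VU_succ m E G (by omega) (by omega), pow_succ]
    linear_combination MvPolynomial.X 0 * ih

theorem comm_le (G : ℕ → ℕ → RAB) {y : ℕ} (hy : y ≤ m) (d : ℕ) :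
    U m (V E G) (m+d) y - V E (U m G) (m+d) y = 0 := by
  induction d with
  | zero => rw [U_zero _ _ (by simp), VU_zero _ _ _ (by simp)]; simp
  | succ d ih =>
    rw [← add_assoc, U_succ m _ (by omega) (by omega), VU_succ m E G (by omega) (by omega)]
    linear_combination MvPolynomial.X 0 * ih

theorem ZZ_succ (G : ℕ → ℕ → RAB) {y : ℕ} (hm : m ≤ y) (hE : E ≤ y) :
    V E (U m (U m G)) (y+1) (y+1) = MvPolynomial.X 0 ^ 2 * V E (U m (U m G)) y y +
      MvPolynomial.X 0 * V E (U m G) y y + MvPolynomial.X 1 * V E (U m G) (y+1) (y+1) := by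
  rw [V_succ E _ hE, V_succ E _ hE, VU_succ m E _ le_rfl hm,
    U_zero m (U m G) (by omega : y + 1 ≤ max (y+1) m), U_succ m (U m G) le_rfl hm,
    U_zero m G (by omega : y + 1 ≤ max (y+1) m), U_zero m G (by omega : y ≤ max y m),
    U_zero m (U m G) (by omega : y ≤ max y m)]
  ring

/-- main relation: V C = C U -/
theorem main2 (G : ℕ → ℕ → RAB) (x y : ℕ) (hyx : y ≤ x) (hmx : m ≤ x) :
    V E (U m (V E G)) x y - V E (V E (U m G)) x y =
      U m (V E (U m G)) x y - V E (U m (U m G)) x y := by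
  induction y with
  | zero =>
    rw [V_zero _ _ (by omega), V_zero _ _ (by omega)]
    obtain ⟨d, rfl⟩ := Nat.exists_eq_add_of_le hmx
    rw [comm_le m E (U m G) (by omega)]; simp
  | succ y ih =>
    have ih := ih (by omega)
    by_cases hE : y + 1 ≤ E
    · rw [V_zero _ _ hE, V_zero _ _ hE, V_zero _ _ hE]
      have : U m (V E (U m G)) x (y+1) = 0 := by
        have z : ∀ a, V E (U m G) a (y+1) = 0 := fun a => V_zero _ _ hE
        generalize V E (U m G) = H at z
        unfold U S
        simp [z]
      rw [this]
    have hE : E ≤ y := by omega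
    rw [V_succ E (U m (V E G)) hE, V_succ E (V E (U m G)) hE]
    by_cases hm : y + 1 ≤ m
    · obtain ⟨d, rfl⟩ := Nat.exists_eq_add_of_le hmx
      have c1 := comm_le m E G hm d
      have c2 := comm_le m E G (by omega : y ≤ m) d
      have c3 := comm_le m E (U m G) hm d
      have c4 := comm_le m E (U m G) (by omega : y ≤ m) d
      linear_combination MvPolynomial.X 0 * ih + c2 + MvPolynomial.X 1 * c1 
        - c3 + MvPolynomial.X 0 * c4
    · have hm : m ≤ y := by omega
      obtain ⟨d, rfl⟩ := Nat.exists_eq_add_of_le hyx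
      have c1 := comm_ge m E G (by omega : m ≤ y + 1) d
      have c2 := comm_ge m E G hm (d+1)
      have c3 := comm_ge m E (U m G) (by omega : m ≤ y + 1) d
      have c4 := comm_ge m E (U m G) hm (d+1)
      have z := ZZ_succ m E G hm hE
      have e : y + (d + 1) = y + 1 + d := by omega
      rw [e] at c2 c4
      rw [pow_succ] at c2 c4
      linear_combination MvPolynomial.X 0 * ih + c2 + MvPolynomial.X 1 * c1 
        - c3 + MvPolynomial.X 0 * c4 + MvPolynomial.X 0 ^ d * z

end two

/-- restriction to two adjacent columns -/
def res (h : ℕ → ℕ) (i : ℕ) (F : (ℕ → ℕ) → RAB) (x y : ℕ) : RAB :=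
  F (Function.update (Function.update h i x) (i+1) y)

theorem res_U (mu h : ℕ → ℕ) (i : ℕ) (F : (ℕ → ℕ) → RAB) :
    res h i (T mu i F) = U (colHeight mu i) (res h i F) := by
  funext x y
  have h1 : i ≠ i + 1 := by omega
  unfold res T U
  simp only [Function.update_self, Function.update_of_ne h1]
  congr 1
  funext a
  rw [Function.update_comm h1, Function.update_idem, Function.update_comm h1]

theorem res_V (mu h : ℕ → ℕ) (i : ℕ) (F : (ℕ → ℕ) → RAB) :
    res h i (T mu (i+1) F) = V (max (h (i+2)) (colHeight mu (i+1))) (res h i F) := by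
  funext x y
  have h1 : i + 1 + 1 ≠ i + 1 := by omega
  have h2 : i + 1 + 1 ≠ i := by omega
  unfold res T V
  simp only [Function.update_self, Function.update_of_ne h1, Function.update_of_ne h2,
    Function.update_idem]

theorem res_self (h : ℕ → ℕ) (i : ℕ) (F : (ℕ → ℕ) → RAB) :
    res h i F (h i) (h (i+1)) = F h := by
  unfold res; simp

end FG

/-- For every fixed partition `mu`, the operators `ũ_i` satisfy the
Fomin–Greene relations: (i) `ũ_i ũ_k ũ_j = ũ_k ũ_i ũ_j` for `i < j < k`;
(ii) `ũ_j ũ_k ũ_i = ũ_j ũ_i ũ_k` for `i < j < k`;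
(iii) `ũ_j(ũ_i ũ_j − ũ_j ũ_i) = (ũ_i ũ_j − ũ_j ũ_i) ũ_i` for `i < j`, i.e.
`ũ_j ũ_i ũ_j − ũ_j ũ_j ũ_i = ũ_i ũ_j ũ_i − ũ_j ũ_i ũ_i`. -/
theorem tuOp_fomin_greene_relations (mu : ℕ → ℕ) (hmu : IsPartitionFun mu) :
    (∀ i j k : ℕ, i < j → j < k → ∀ x : ModAbove mu,
      tuOp i (tuOp k (tuOp j x)) = tuOp k (tuOp i (tuOp j x))) ∧
    (∀ i j k : ℕ, i < j → j < k → ∀ x : ModAbove mu,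
      tuOp j (tuOp k (tuOp i x)) = tuOp j (tuOp i (tuOp k x))) ∧
    (∀ i j : ℕ, i < j → ∀ x : ModAbove mu,
      (fun nu => tuOp j (tuOp i (tuOp j x)) nu - tuOp j (tuOp j (tuOp i x)) nu) =
      (fun nu => tuOp i (tuOp j (tuOp i x)) nu - tuOp j (tuOp i (tuOp i x)) nu)) := by
  refine ⟨fun i j k hij hjk x => ?_, fun i j k hij hjk x => ?_, fun i j hij x => ?_⟩
  · funext nu
    rw [FG.ext_tu3 hmu, FG.ext_tu3 hmu, FG.T_comm mu i k (by omega)]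
  · funext nu
    rw [FG.ext_tu3 hmu, FG.ext_tu3 hmu, FG.T_comm mu i k (by omega)]
  · funext nu
    simp only [FG.ext_tu3 hmu]
    by_cases h : i + 2 ≤ j
    · rw [FG.T_comm mu i j h, FG.T_comm mu i j h]; simp
    · obtain rfl : j = i + 1 := by omega
      have hv := FG.valid_col hmu nu
      set h := colHeight nu.1
      rw [← FG.res_self h i (FG.T mu (i+1) (FG.T mu i (FG.T mu (i+1) _))),
        ← FG.res_self h i (FG.T mu (i+1) (FG.T mu (i+1) (FG.T mu i _))),
        ← FG.res_self h i (FG.T mu i (FG.T mu (i+1) (FG.T mu i _))),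
        ← FG.res_self h i (FG.T mu (i+1) (FG.T mu i (FG.T mu i _)))]
      simp only [FG.res_U, FG.res_V]
      exact FG.main2 _ _ _ _ _ (hv.1.1 i) (hv.2 i)
end
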